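/- Let c>0 with 1/c an integer, and let ℓ ≥ 3/c + 3 be an integer. Then there exists ε>0 such that every ε-sparse, (ε|G|^{1-c}, ε|G|)-coherent graph G with |G|>1 has an induced cycle of length ℓ. -/

import Mathlib

noncomputable section

namespace PurePairs

open SimpleGraph

variable {V W : Type*}

/-- A pure pair in `G`: a pair of disjoint vertex sets that are complete
or anticomplete to each other. -/
def PurePair (G : SimpleGraph V) (A B : Set V) : Prop :=
  Disjoint A B ∧
    ((∀ a ∈ A, ∀ b ∈ B, G.Adj a b) ∨ (∀ a ∈ A, ∀ b ∈ B, ¬ G.Adj a b))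

/-- `G` contains `H`: some induced subgraph of `G` is isomorphic to `H`. -/
def Contains (G : SimpleGraph V) (H : SimpleGraph W) : Prop :=
  Nonempty (H ↪g G)

/-- The congestion of a graph `H`: the maximum (here: supremum, together with `0`)
of `1 - (|J|-1)/|E(J)|` over all subgraphs `J` of `H` with at least one edge.
If `H` has no edges this is `0`. -/
def congestion (H : SimpleGraph V) : ℝ :=
  sSup ({0} ∪ {x : ℝ | ∃ J : H.Subgraph, J.edgeSet.Nonempty ∧
    x = 1 - ((J.verts.ncard : ℝ) - 1) / (J.edgeSet.ncard : ℝ)})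

/-- `A` is anticomplete to `B`: no edges between them. -/
def Anticomplete (G : SimpleGraph V) (A B : Set V) : Prop :=
  ∀ a ∈ A, ∀ b ∈ B, ¬ G.Adj a b

/-- `A` covers `B`: every vertex of `B` has a neighbour in `A`. -/
def Covers (G : SimpleGraph V) (A B : Set V) : Prop :=
  ∀ b ∈ B, ∃ a ∈ A, G.Adj a b

/-- `G` is `ε`-sparse: every vertex has degree less than `ε|G|`. -/
def EpsSparse (G : SimpleGraph V) [Fintype V] (ε : ℝ) : Prop :=
  ∀ v : V, ((G.neighborSet v).ncard : ℝ) < ε * (Fintype.card V : ℝ)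

/-- `G` is `(γ,δ)`-coherent: there is no pair of disjoint anticomplete sets `A`, `B`
with `|A| ≥ γ` and `|B| ≥ δ`. -/
def Coherent (G : SimpleGraph V) (γ δ : ℝ) : Prop :=
  ¬ ∃ A B : Set V, Disjoint A B ∧ Anticomplete G A B ∧
      γ ≤ (A.ncard : ℝ) ∧ δ ≤ (B.ncard : ℝ)

/-- `N(X)`: the set of vertices with a neighbour in `X`. -/
def nbhd (G : SimpleGraph V) (X : Set V) : Set V :=
  {v | ∃ x ∈ X, G.Adj x v}

/-- A blockade: a family of nonempty pairwise disjoint vertex sets indexed by a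
finite set of integers. -/
def IsBlockade (I : Finset ℤ) (A : ℤ → Set V) : Prop :=
  (∀ i ∈ I, (A i).Nonempty) ∧
    ∀ i ∈ I, ∀ j ∈ I, i ≠ j → Disjoint (A i) (A j)

/-- The blockade `(A i : i ∈ I)` is `(γ,δ)`-divergent. -/
def Divergent (G : SimpleGraph V) (I : Finset ℤ) (A : ℤ → Set V) (γ δ : ℝ) : Prop :=
  ∃ i ∈ I, ∃ j ∈ I, i ≠ j ∧ ∃ X ⊆ A i, ∃ Y ⊆ A j,
    γ * ((A i).ncard : ℝ) ≤ (X.ncard : ℝ) ∧ δ * ((A j).ncard : ℝ) ≤ (Y.ncard : ℝ) ∧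
    Anticomplete G X Y

/-- The blockade `(A i : i ∈ I)` is `τ`-expanding. -/
def Expanding (G : SimpleGraph V) (I : Finset ℤ) (A : ℤ → Set V) (τ : ℝ) : Prop :=
  ∀ i ∈ I, ∀ j ∈ I, i ≠ j → ∀ X ⊆ A i,
    min (τ * (X.ncard : ℝ) / ((A i).ncard : ℝ)) (1/4)
      ≤ (((nbhd G X) ∩ A j).ncard : ℝ) / ((A j).ncard : ℝ)

/-- The linkage of the blockade `(A i : i ∈ I)` is at most `lam`. -/
def LinkageLE (G : SimpleGraph V) (I : Finset ℤ) (A : ℤ → Set V) (lam : ℝ) : Prop :=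
  ∀ i ∈ I, ∀ j ∈ I, i ≠ j → ∀ v ∈ A i,
    ((G.neighborSet v ∩ A j).ncard : ℝ) ≤ lam * ((A j).ncard : ℝ)

/-- The shrinkage of the blockade `(A i : i ∈ I)` is at most `σ`, i.e. its width is at
least `|G|^{1-σ}`. -/
def ShrinkageLE [Fintype V] (I : Finset ℤ) (A : ℤ → Set V) (σ : ℝ) : Prop :=
  ∀ i ∈ I, (Fintype.card V : ℝ) ^ (1 - σ) ≤ ((A i).ncard : ℝ)

/-- `(L 0, …, L k)` is a levelling in `G`. -/
def IsLevelling (G : SimpleGraph V) (L : ℕ → Set V) (k : ℕ) : Prop :=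
  1 ≤ k ∧ (L 0).ncard = 1 ∧
  (∀ i ≤ k, ∀ j ≤ k, i ≠ j → Disjoint (L i) (L j)) ∧
  (∀ i, 1 ≤ i → i ≤ k → Covers G (L (i-1)) (L i)) ∧
  (∀ i, 2 ≤ i → i ≤ k → ∀ h, h + 2 ≤ i → Anticomplete G (L h) (L i))

/-- The levelling `(L 0, …, L k)` reaches `C`, i.e. `(L 0, …, L k, C)` is a levelling. -/
def Reaches (G : SimpleGraph V) (L : ℕ → Set V) (k : ℕ) (C : Set V) : Prop :=
  IsLevelling G (fun i => if i = k + 1 then C else L i) (k + 1)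

/-- The levelling `(L 0, …, L k)` is `(B i : i ∈ I)`-rainbow. -/
def RainbowLevelling (I : Finset ℤ) (B : ℤ → Set V) (L : ℕ → Set V) (k : ℕ) : Prop :=
  ∃ q : ℕ → ℤ, (∀ i ≤ k, q i ∈ I ∧ L i ⊆ B (q i)) ∧
    ∀ i ≤ k, ∀ j ≤ k, q i = q j → i = j

/-- The levelling `(L 0, …, L k)` grades the blockade `(C j : j ∈ J)` (in some order). -/
def Grades (G : SimpleGraph V) (L : ℕ → Set V) (k : ℕ) (J : Finset ℤ) (C : ℤ → Set V) :
    Prop :=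
  Reaches G L k (⋃ j ∈ J, C j) ∧
  ∃ e : ℕ → ℤ, (∀ g < J.card, e g ∈ J) ∧
    (∀ g < J.card, ∀ h < J.card, e g = e h → g = h) ∧
    ∀ g < J.card, ∃ Y ⊆ L k,
      (∀ h, g ≤ h → h < J.card → Covers G Y (C (e h))) ∧
      (∀ h, h < g → Anticomplete G Y (C (e h)))

/-- The levelling `(L 0, …, L k)` grades the blockade `(C j : j ∈ J)` forwards. -/
def GradesFwd (G : SimpleGraph V) (L : ℕ → Set V) (k : ℕ) (J : Finset ℤ) (C : ℤ → Set V) :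
    Prop :=
  Reaches G L k (⋃ j ∈ J, C j) ∧
  ∀ j ∈ J, ∃ Y ⊆ L k,
    (∀ i ∈ J, j ≤ i → Covers G Y (C i)) ∧
    (∀ i ∈ J, i < j → Anticomplete G Y (C i))

/-- The levelling `(L 0, …, L k)` grades the blockade `(C j : j ∈ J)` backwards. -/
def GradesBwd (G : SimpleGraph V) (L : ℕ → Set V) (k : ℕ) (J : Finset ℤ) (C : ℤ → Set V) :
    Prop :=
  Reaches G L k (⋃ j ∈ J, C j) ∧
  ∀ j ∈ J, ∃ Y ⊆ L k,
    (∀ i ∈ J, i ≤ j → Covers G Y (C i)) ∧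
    (∀ i ∈ J, j < i → Anticomplete G Y (C i))

/-- Two levellings are parallel. -/
def Parallel (G : SimpleGraph V) (L : ℕ → Set V) (k : ℕ) (M : ℕ → Set V) (m : ℕ) : Prop :=
  L 0 = M 0 ∧
  Disjoint (⋃ j ∈ Finset.Icc 1 m, M j) (⋃ i ∈ Finset.Icc 1 k, L i) ∧
  Anticomplete G (⋃ j ∈ Finset.Icc 1 m, M j) (⋃ i ∈ Finset.Icc 1 k, L i)

/-- `(L, M, C)` is a bi-levelling, where `L` has height `k` and `M` has height `m`:
`C` is a blockade, `L, M` are parallel levellings both reaching the union of the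
blocks of `C`, and `L` grades `C` forwards. Its height is `k + m` and its length is
the length of `C`. -/
def IsBiLevelling (G : SimpleGraph V) (L : ℕ → Set V) (k : ℕ) (M : ℕ → Set V) (m : ℕ)
    (J : Finset ℤ) (C : ℤ → Set V) : Prop :=
  IsBlockade J C ∧ IsLevelling G L k ∧ IsLevelling G M m ∧ Parallel G L k M m ∧
    Reaches G M m (⋃ j ∈ J, C j) ∧ GradesFwd G L k J C

/-- A bi-grading: a bi-levelling in which `M` also grades `C` backwards. -/
def IsBiGrading (G : SimpleGraph V) (L : ℕ → Set V) (k : ℕ) (M : ℕ → Set V) (m : ℕ)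
    (J : Finset ℤ) (C : ℤ → Set V) : Prop :=
  IsBiLevelling G L k M m J C ∧ GradesBwd G M m J C

/-- The bi-levelling `(L, M, C)` is `(A i : i ∈ I)`-rainbow: each block of `C`, each
level of `L`, and each level of `M` other than `M 0 = L 0` is included in a block of
`A`, and distinct such sets lie in distinct blocks. -/
def RainbowBiLevelling (I : Finset ℤ) (A : ℤ → Set V)
    (L : ℕ → Set V) (k : ℕ) (M : ℕ → Set V) (m : ℕ)
    (J : Finset ℤ) (C : ℤ → Set V) : Prop :=
  ∃ (qc : ℤ → ℤ) (ql qm : ℕ → ℤ),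
    (∀ j ∈ J, qc j ∈ I ∧ C j ⊆ A (qc j)) ∧
    (∀ i ≤ k, ql i ∈ I ∧ L i ⊆ A (ql i)) ∧
    (∀ i, 1 ≤ i → i ≤ m → qm i ∈ I ∧ M i ⊆ A (qm i)) ∧
    (∀ j ∈ J, ∀ j' ∈ J, qc j = qc j' → j = j') ∧
    (∀ i ≤ k, ∀ i' ≤ k, ql i = ql i' → i = i') ∧
    (∀ i, 1 ≤ i → i ≤ m → ∀ i', 1 ≤ i' → i' ≤ m → qm i = qm i' → i = i') ∧
    (∀ j ∈ J, ∀ i ≤ k, qc j ≠ ql i) ∧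
    (∀ j ∈ J, ∀ i, 1 ≤ i → i ≤ m → qc j ≠ qm i) ∧
    (∀ i ≤ k, ∀ i', 1 ≤ i' → i' ≤ m → ql i ≠ qm i')

/-- Each block of `(C j : j ∈ J)` lies in a block of `(A i : i ∈ I)`; the `A`-size of
`C` is at least `η` when every block of `C` has size at least `η` times the size of the
block of `A` containing it. -/
def SizeGE (I : Finset ℤ) (A : ℤ → Set V) (J : Finset ℤ) (C : ℤ → Set V) (η : ℝ) : Prop :=
  ∀ j ∈ J, ∀ i ∈ I, C j ⊆ A i → η * ((A i).ncard : ℝ) ≤ ((C j).ncard : ℝ)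

/-- A `(B i : i ∈ I)`-rainbow induced path `p 0 - p 1 - ⋯ - p n` in `G`. -/
def RainbowPath (G : SimpleGraph V) (I : Finset ℤ) (B : ℤ → Set V)
    (n : ℕ) (p : ℕ → V) : Prop :=
  (∀ i ≤ n, ∀ j ≤ n, p i = p j → i = j) ∧
  (∀ i < n, G.Adj (p i) (p (i+1))) ∧
  (∀ i j, i + 1 < j → j ≤ n → ¬ G.Adj (p i) (p j)) ∧
  ∃ q : ℕ → ℤ, (∀ i ≤ n, q i ∈ I ∧ p i ∈ B (q i)) ∧
    ∀ i ≤ n, ∀ j ≤ n, q i = q j → i = j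

/-- A `(B i : i ∈ I)`-rainbow copy of `H` in `G`: an induced copy of `H` with each
vertex in a different block. -/
def RainbowCopy (G : SimpleGraph V) (I : Finset ℤ) (B : ℤ → Set V)
    (H : SimpleGraph W) : Prop :=
  ∃ (f : H ↪g G) (q : W → ℤ), Function.Injective q ∧ ∀ w : W, q w ∈ I ∧ f w ∈ B (q w)

/-- `(N,K,σ,lam,c)` forces `H`. -/
def Forces (H : SimpleGraph W) (N K : ℕ) (σ lam c : ℝ) : Prop :=
  ∀ {V : Type} [Fintype V] (G : SimpleGraph V),
    Coherent G ((Fintype.card V : ℝ) ^ (1 - c)) ((Fintype.card V : ℝ) ^ (1 - c)) →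
    N ≤ Fintype.card V →
    ∀ (I : Finset ℤ) (A : ℤ → Set V), IsBlockade I A → I.card = K →
      ShrinkageLE I A σ → LinkageLE G I A lam →
      RainbowCopy G I A H

/-- `p 0 - ⋯ - p n` is a handle of length `n` that can be added to (the graph induced
on) `S` inside the ambient graph `H`: an induced path of `H[S ∪ p]` of length at least
two whose ends lie in `S`, whose internal vertices avoid `S` and have degree two in
`H[S ∪ p]`. -/
def IsHandle (H : SimpleGraph V) (S : Set V) (n : ℕ) (p : ℕ → V) : Prop :=
  2 ≤ n ∧
  (∀ i ≤ n, ∀ j ≤ n, p i = p j → i = j) ∧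
  p 0 ∈ S ∧ p n ∈ S ∧
  (∀ i, 0 < i → i < n → p i ∉ S) ∧
  (∀ i < n, H.Adj (p i) (p (i+1))) ∧
  (∀ i j, i + 1 < j → j ≤ n → ¬ H.Adj (p i) (p j)) ∧
  (∀ i, 0 < i → i < n → ∀ w, (w ∈ S ∨ ∃ j ≤ n, w = p j) → H.Adj (p i) w →
    w = p (i-1) ∨ w = p (i+1))

/-- The vertex sets `S` such that the induced subgraph `H[S]` can be built, starting
from the two-vertex graph with no edges, by repeatedly adding handles of length at
least `β`. -/
inductive BuildableOn (H : SimpleGraph V) (β : ℕ) : Set V → Prop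
  | base (u v : V) (huv : u ≠ v) (hadj : ¬ H.Adj u v) : BuildableOn H β {u, v}
  | handle (S : Set V) (n : ℕ) (p : ℕ → V) (hS : BuildableOn H β S)
      (hh : IsHandle H S n p) (hn : β ≤ n) :
      BuildableOn H β (S ∪ {w | ∃ j ≤ n, w = p j})

/-- `H` is `β`-buildable. -/
def Buildable [Fintype V] (H : SimpleGraph V) (β : ℕ) : Prop :=
  BuildableOn H β Set.univ

/-- The vertex sets `S` such that the induced subgraph `H[S]` can be built, starting
from the null graph, by repeatedly adding a subleaf or a handle of length at least
`β`. -/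
inductive WeaklyBuildableOn (H : SimpleGraph V) (β : ℕ) : Set V → Prop
  | empty : WeaklyBuildableOn H β ∅
  | subleaf (S : Set V) (v : V) (hv : v ∉ S) (hdeg : (S ∩ H.neighborSet v).ncard ≤ 1)
      (hS : WeaklyBuildableOn H β S) : WeaklyBuildableOn H β (insert v S)
  | handle (S : Set V) (n : ℕ) (p : ℕ → V) (hS : WeaklyBuildableOn H β S)
      (hh : IsHandle H S n p) (hn : β ≤ n) :
      WeaklyBuildableOn H β (S ∪ {w | ∃ j ≤ n, w = p j})

/-- `H` is weakly `β`-buildable. -/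
def WeaklyBuildable [Fintype V] (H : SimpleGraph V) (β : ℕ) : Prop :=
  WeaklyBuildableOn H β Set.univ

/-!
Write `m = ⌈1 / c⌉` and `n = |G|`. Coherence makes vertex sets expand by a factor `n ^ c` per step
until they are of linear size, so some ball of radius about `m` is almost the whole graph. Take the
least radius `k` at which balls start to be large: then there is a vertex `s` such that the ball `P`
of radius `k` around `s` is small while its outer boundary is large. Adding the vertices of `P` to a
growing chain `F 0 ⊆ F 1 ⊆ ⋯` a few at a time cuts this boundary into many large layers, the `b`-th
one consisting of the vertices with a neighbour in `F (b + 1)` but none in `F b`.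

From a vertex `y` of the zeroth layer one can start induced paths outside `P` of any prescribed
length `h + 1 > m` which end in some layer `b` with all interior vertices beyond the layers
`0, …, b`. Together with geodesics `Y` from `s` to `y` and `x` from `s` to the end `z` of the path
this gives a cycle. If `z` is far from all the `Y j` with `1 ≤ j`, then the only edges between the
three paths that can spoil it join `x 1` to `Y 1` or `Y 2`. By the pigeonhole principle we may
prescribe the last neighbour `Y i` of `x 1`, `i ≤ 2`, before choosing the path; the induced cycle
through `Y i` and `x 1` then has length `2 * k - i + h + 1`, where `h` is ours to choose.
-/

section Coherence

variable {G : SimpleGraph V} {A B T : Set V} {γ δ : ℝ}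

lemma nbhd_mono (h : A ⊆ B) : nbhd G A ⊆ nbhd G B :=
  fun _ ⟨a, ha, hav⟩ => ⟨a, h ha, hav⟩

lemma nbhd_empty : nbhd G ∅ = ∅ := by
  simp [nbhd]

lemma nbhd_singleton (v : V) : nbhd G {v} = G.neighborSet v := by
  simp [nbhd, neighborSet]

lemma nbhd_union : nbhd G (A ∪ B) = nbhd G A ∪ nbhd G B := by
  ext v
  simp only [nbhd, Set.mem_union, or_and_right, exists_or, Set.mem_ofPred_eq]

lemma ncard_nbhd_union_inter_le (A B T : Set V) :
    (nbhd G (A ∪ B) ∩ T).ncard ≤ (nbhd G A ∩ T).ncard + (nbhd G B ∩ T).ncard := by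
  rw [nbhd_union, Set.union_inter_distrib_right]
  exact Set.ncard_union_le _ _

lemma ncard_sdiff_eq_sub_ncard_inter [Finite V] (T N : Set V) :
    ((T \ N).ncard : ℝ) = T.ncard - (N ∩ T).ncard := by
  rw [eq_sub_iff_add_eq', Set.inter_comm]
  exact_mod_cast Set.ncard_inter_add_ncard_sdiff_eq_ncard T N

lemma Coherent.sub_lt_ncard_nbhd_inter [Finite V] (hG : Coherent G γ δ) (hB : γ ≤ B.ncard)
    (hBW : Disjoint B T) : (T.ncard : ℝ) - δ < (nbhd G B ∩ T).ncard := by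
  by_contra! h
  refine hG ⟨B, T \ nbhd G B, hBW.mono_right Set.sdiff_subset,
    fun b hb w hw hbw => hw.2 ⟨b, hb, hbw⟩, hB, ?_⟩
  rw [ncard_sdiff_eq_sub_ncard_inter]
  linarith

end Coherence

section LightSets

variable {ι : Type*} {G : SimpleGraph V} {T : ι → Set V} {w : ℝ} {B S : Set V}

/-- `B` is light for the targets `T a`, `a ∈ I`, when it sees at most `w` vertices of each. -/
def IsLight (G : SimpleGraph V) (T : ι → Set V) (w : ℝ) (I : Set ι) (B : Set V) : Prop :=
  ∀ a ∈ I, ((nbhd G B ∩ T a).ncard : ℝ) ≤ w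

variable [Finite V]

lemma mul_le_of_subadditive_of_minimal {f : Set V → ℝ} {P : Set V → Prop} {a b d : ℝ}
    (hb : 0 ≤ b) (hd : 0 < d) (hf : ∀ A B, f (A ∪ B) ≤ f A + f B)
    (hP : ∀ A ⊆ S, P A → f A ≤ a)
    (hmin : ∀ M ⊆ S, Minimal (¬ P ·) M → f M ≤ b ∧ d ≤ M.ncard) (hB : B ⊆ S) :
    f B * d ≤ a * d + b * B.ncard := by
  induction B using WellFoundedLT.induction with
  | ind B ih =>
    by_cases hPB : P B
    · have : f B * d ≤ a * d := mul_le_mul_of_nonneg_right (hP B hB hPB) hd.le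
      have : 0 ≤ b * B.ncard := by positivity
      linarith
    obtain ⟨M, hMB : M ⊆ B, hM⟩ := Finite.exists_le_minimal (p := (¬ P ·)) hPB
    obtain ⟨hfM, hdM⟩ := hmin M (hMB.trans hB) hM
    have hMne : M.Nonempty := (Set.ncard_pos).1 (by exact_mod_cast hd.trans_le hdM)
    have hlt : B \ M < B := hMB.sdiff_ssubset_of_nonempty hMne
    have hrest := ih (B \ M) hlt (hlt.le.trans hB)
    have hsplit := hf (B \ M) M
    rw [Set.sdiff_union_of_subset hMB] at hsplit
    have hcard : ((B \ M).ncard : ℝ) + M.ncard = B.ncard := by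
      exact_mod_cast Set.ncard_sdiff_add_ncard_of_subset hMB
    have : f M * d ≤ b * M.ncard := mul_le_mul hfM hdM hd.le hb
    calc f B * d ≤ (f (B \ M) + f M) * d := by gcongr
      _ = f (B \ M) * d + f M * d := add_mul _ _ _
      _ ≤ a * d + b * (B \ M).ncard + b * M.ncard := by linarith
      _ = a * d + b * B.ncard := by rw [← hcard]; ring

lemma pow_le_ncard_of_not_isLight {Γ : ℕ → Set ι} {γ D : ℝ} {L : ℕ} (hγ : 0 < γ) (hD : 1 ≤ D)
    (hw : γ + 2 * γ * D ≤ w) (hG : ∀ v a, ((G.neighborSet v ∩ T a).ncard : ℝ) ≤ w)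
    (hS : ∀ g < L, ∀ A ⊆ S, IsLight G T w (Γ g) A →
      ∀ b ∈ Γ (g + 1), ((nbhd G A ∩ T b).ncard : ℝ) < γ) :
    ∀ g ≤ L, ∀ B ⊆ S, ¬ IsLight G T w (Γ g) B → D ^ g ≤ B.ncard := by
  have hw0 : 0 ≤ w := le_trans (by positivity) hw
  have isLight_empty (g) : IsLight G T w (Γ g) ∅ := by simp [IsLight, nbhd_empty, hw0]
  have isLight_singleton (g v) : IsLight G T w (Γ g) {v} := fun a _ => by
    simpa only [nbhd_singleton] using hG v a
  intro g
  induction g with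
  | zero =>
    intro _ B _ hB
    have hne : B.Nonempty := Set.nonempty_iff_ne_empty.2 fun h => hB (h ▸ isLight_empty 0)
    simpa using Nat.succ_le_iff.2 hne.ncard_pos
  | succ g ih =>
    intro hgL B hBS hB
    obtain ⟨b, hb, hbB⟩ : ∃ b ∈ Γ (g + 1), w < (nbhd G B ∩ T b).ncard := by
      simpa [IsLight] using hB
    have hmin (M : Set V) (hMS : M ⊆ S) (hM : Minimal (¬ IsLight G T w (Γ g) ·) M) :
        ((nbhd G M ∩ T b).ncard : ℝ) ≤ 2 * γ ∧ D ^ g ≤ M.ncard := by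
      refine ⟨?_, ih (by omega) M hMS hM.prop⟩
      obtain ⟨v, hv⟩ : M.Nonempty :=
        Set.nonempty_iff_ne_empty.2 fun h => hM.prop (h ▸ isLight_empty g)
      have hrest : IsLight G T w (Γ g) (M \ {v}) :=
        not_not.1 (hM.not_prop_of_lt (Set.sdiff_singleton_ssubset.2 hv))
      have hrest' := hS g hgL _ (Set.sdiff_subset.trans hMS) hrest b hb
      have hv' := hS g hgL _ (Set.singleton_subset_iff.2 (hMS hv)) (isLight_singleton g v) b hb
      have hsplit := ncard_nbhd_union_inter_le (G := G) (M \ {v}) {v} (T b)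
      rw [Set.sdiff_union_of_subset (Set.singleton_subset_iff.2 hv)] at hsplit
      have : ((nbhd G M ∩ T b).ncard : ℝ) ≤
        (nbhd G (M \ {v}) ∩ T b).ncard + (nbhd G {v} ∩ T b).ncard := by exact_mod_cast hsplit
      linarith
    have key := mul_le_of_subadditive_of_minimal (f := fun A => ((nbhd G A ∩ T b).ncard : ℝ))
      (P := IsLight G T w (Γ g)) (a := γ) (by positivity) (by positivity : 0 < D ^ g)
      (fun A B => by exact_mod_cast ncard_nbhd_union_inter_le A B (T b))
      (fun A hA hA' => (hS g hgL A hA hA' b hb).le) hmin hBS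
    have : w * D ^ g ≤ (nbhd G B ∩ T b).ncard * D ^ g := by gcongr
    have : (γ + 2 * γ * D) * D ^ g ≤ w * D ^ g := by gcongr
    refine le_of_mul_le_mul_left (a := 2 * γ) ?_ (by positivity)
    rw [pow_succ]
    linarith

end LightSets

section Expansion

variable {G : SimpleGraph V} {t γ : ℝ} {m : ℕ}

/-- Breadth-first search from `B` inside the unexplored set `H` has a layer with at least `γ`
vertices at depth `d`. -/
def ExpandsTo (G : SimpleGraph V) (γ : ℝ) : ℕ → Set V → Set V → Prop
  | 0, B, _ => γ ≤ B.ncard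
  | d + 1, B, H => ExpandsTo G γ d (nbhd G B ∩ H) (H \ nbhd G B)

lemma expandsTo_succ_sdiff {B D Z : Set V} {d : ℕ}
    (h : ExpandsTo G γ d (nbhd G B ∩ (Z \ D)) (Z \ (D ∪ nbhd G B ∩ (Z \ D)))) :
    ExpandsTo G γ (d + 1) B (Z \ D) := by
  have hrest : (Z \ D) \ nbhd G B = Z \ (D ∪ nbhd G B ∩ (Z \ D)) := by
    ext v
    simp only [Set.mem_sdiff, Set.mem_inter_iff, Set.mem_union]
    tauto
  rwa [ExpandsTo, hrest]

lemma nbhd_ball_subset (v : V) (r : ℕ∞) : nbhd G (G.ball v r) ⊆ G.ball v (r + 1) := by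
  rintro u ⟨x, hx, hxu⟩
  have hux : G.edist u x = 1 := edist_eq_one_iff_adj.2 hxu.symm
  calc G.edist u v ≤ G.edist u x + G.edist x v := SimpleGraph.edist_triangle
    _ = G.edist x v + 1 := by rw [hux, add_comm]
    _ < r + 1 := (ENat.add_lt_add_iff_right ENat.one_ne_top).2 hx

lemma ExpandsTo.exists_subset_ball {d r : ℕ} {B H : Set V} {v : V} (h : ExpandsTo G γ d B H)
    (hB : B ⊆ G.ball v r) : ∃ L ⊆ G.ball v (r + d : ℕ), γ ≤ L.ncard := by
  induction d generalizing B H r with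
  | zero => exact ⟨B, hB, h⟩
  | succ d ih =>
    obtain ⟨L, hL, hγL⟩ := ih (r := r + 1) h <| Set.inter_subset_left.trans <|
      (nbhd_mono hB).trans <| by exact_mod_cast nbhd_ball_subset v r
    exact ⟨L, by rwa [add_assoc, add_comm 1 d] at hL, hγL⟩

/-- Every nonempty subset `Y` of `U` with at most `s` vertices has at least `t * |Y|` neighbours
in `Z` outside `Y`. -/
def VertexExpands (G : SimpleGraph V) (t s : ℝ) (U Z : Set V) : Prop :=
  ∀ Y ⊆ U, Y.Nonempty → (Y.ncard : ℝ) ≤ s → t * Y.ncard ≤ ((nbhd G Y ∩ Z) \ Y).ncard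

variable [Finite V]

lemma Coherent.exists_vertexExpands {Z : Set V} (hG : Coherent G γ (t * γ)) (hγ : 0 < γ)
    (ht : 1 ≤ t) (hZ : (2 * m + 3) * (t * γ) ≤ Z.ncard) (U : Set V) :
    ∃ X ⊆ U, (X.ncard : ℝ) < γ ∧ VertexExpands G t (m * γ) (U \ X) (Z \ X) := by
  let P (X : Set V) : Prop := X ⊆ U ∧ (X.ncard : ℝ) ≤ (m + 1) * γ ∧
    (((nbhd G X ∩ Z) \ X).ncard : ℝ) ≤ t * X.ncard
  have hP : P ∅ := ⟨Set.empty_subset U, by rw [Set.ncard_empty, Nat.cast_zero]; positivity,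
    by simp [nbhd_empty]⟩
  obtain ⟨X, -, ⟨hXU, hXcard, hXnbhd⟩, hXmax⟩ := Finite.exists_le_maximal hP
  have hXγ : (X.ncard : ℝ) < γ := by
    by_contra! hcon
    have hcover := hG.sub_lt_ncard_nbhd_inter hcon (Set.disjoint_sdiff_right : Disjoint X (Z \ X))
    rw [← Set.inter_sdiff_assoc] at hcover
    have hsdiff : (Z.ncard : ℝ) ≤ (Z \ X).ncard + X.ncard := by
      exact_mod_cast Set.ncard_le_ncard_sdiff_add_ncard Z X
    have : t * X.ncard ≤ t * ((m + 1) * γ) := by gcongr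
    have : ((m : ℝ) + 1) * γ ≤ (m + 1) * (t * γ) := by
      gcongr
      exact le_mul_of_one_le_left hγ.le ht
    linarith
  refine ⟨X, hXU, hXγ, fun Y hYU hYne hYcard => ?_⟩
  by_contra! hcon
  have hdisj : Disjoint X Y := (Set.disjoint_of_subset_left hYU Set.disjoint_sdiff_left).symm
  have hcard : ((X ∪ Y).ncard : ℝ) = X.ncard + Y.ncard := by
    exact_mod_cast Set.ncard_union_eq hdisj
  have hsub : (nbhd G (X ∪ Y) ∩ Z) \ (X ∪ Y) ⊆
      ((nbhd G X ∩ Z) \ X) ∪ ((nbhd G Y ∩ (Z \ X)) \ Y) := by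
    rw [nbhd_union]
    intro v hv
    simp only [Set.mem_sdiff, Set.mem_inter_iff, Set.mem_union] at hv ⊢
    tauto
  have hnbhd : (((nbhd G (X ∪ Y) ∩ Z) \ (X ∪ Y)).ncard : ℝ) ≤
      ((nbhd G X ∩ Z) \ X).ncard + ((nbhd G Y ∩ (Z \ X)) \ Y).ncard := by
    exact_mod_cast (Set.ncard_le_ncard hsub).trans (Set.ncard_union_le _ _)
  have hYX : Y ⊆ X := Set.subset_union_right.trans <| hXmax
    ⟨Set.union_subset hXU (hYU.trans Set.sdiff_subset), by rw [hcard]; linarith,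
      by rw [hcard]; linarith⟩ Set.subset_union_left
  obtain ⟨y, hy⟩ := hYne
  exact (hYU hy).2 (hYX hy)

-- `D` is the set of vertices explored so far and `B ⊆ D` the last layer.
lemma VertexExpands.exists_expandsTo_of_layer {U Z : Set V}
    (hG : VertexExpands G t ((m + 1) * γ) U Z) (hZU : Z ⊆ U) (ht : 1 ≤ t) (hγ : γ ≤ t ^ m) {d : ℕ} :
    ∀ {i : ℕ} {B D : Set V}, i + d = m → D ⊆ U → B ⊆ D → t ^ i ≤ B.ncard →
      ((D \ B).ncard : ℝ) ≤ i * γ → (nbhd G D ∩ Z) \ D ⊆ nbhd G B →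
      ∃ d' ≤ d, ExpandsTo G γ d' B (Z \ D) := by
  induction d with
  | zero =>
    rintro i B D rfl - - hB - -
    exact ⟨0, le_rfl, hγ.trans hB⟩
  | succ d ih =>
    intro i B D hid hDU hBD hB hDB hN
    by_cases hBγ : γ ≤ B.ncard
    · exact ⟨0, Nat.zero_le _, hBγ⟩
    push Not at hBγ
    have hBpos : (0 : ℝ) < B.ncard := (by positivity : 0 < t ^ i).trans_le hB
    have hBne : B.Nonempty := (Set.ncard_pos).1 (by exact_mod_cast hBpos)
    have hDcard : ((D \ B).ncard : ℝ) + B.ncard = D.ncard := by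
      exact_mod_cast Set.ncard_sdiff_add_ncard_of_subset hBD
    set B' : Set V := nbhd G B ∩ (Z \ D)
    have hlayer : (nbhd G D ∩ Z) \ D ⊆ B' := fun v hv => ⟨hN hv, hv.1.2, hv.2⟩
    have hDle : (D.ncard : ℝ) ≤ (i + 1) * γ := by linarith
    have hγ0 : 0 < γ := hBpos.trans hBγ
    have him : (i : ℝ) ≤ m := by exact_mod_cast (by omega : i ≤ m)
    have hexp : t * D.ncard ≤ B'.ncard :=
      (hG D hDU (hBne.mono hBD) (hDle.trans (by gcongr))).trans
        (by exact_mod_cast Set.ncard_le_ncard hlayer)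
    obtain ⟨d', hd', hE⟩ := ih (i := i + 1) (B := B') (D := D ∪ B') (by omega)
      (Set.union_subset hDU fun v hv => hZU hv.2.1) Set.subset_union_right
      (by
        have : (B.ncard : ℝ) ≤ D.ncard := by exact_mod_cast Set.ncard_le_ncard hBD
        calc t ^ (i + 1) = t * t ^ i := pow_succ' t i
          _ ≤ t * D.ncard := by gcongr; linarith
          _ ≤ B'.ncard := hexp)
      (by
        have hsub : (D ∪ B') \ B' ⊆ D := by simp
        have : (((D ∪ B') \ B').ncard : ℝ) ≤ D.ncard := by exact_mod_cast Set.ncard_le_ncard hsub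
        push_cast
        linarith)
      (by
        rw [nbhd_union]
        rintro v ⟨⟨hv | hv, hvZ⟩, hvD⟩
        · exact absurd (Or.inr (hlayer ⟨⟨hv, hvZ⟩, fun h => hvD (Or.inl h)⟩)) hvD
        · exact hv)
    exact ⟨d' + 1, by omega, expandsTo_succ_sdiff hE⟩

end Expansion

/-- A graph on `n` vertices that is `(γ, e)`-coherent with maximum degree at most `e`, where
`e = t * γ` and `n ≤ t ^ m`. For the theorem, `t = n ^ c`, `γ = ε * n ^ (1 - c)`, `e = ε * n` and
`m = ⌈1 / c⌉`. -/
structure SparseCoherent (G : SimpleGraph V) (m : ℕ) (t γ e : ℝ) : Prop where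
  one_lt_card : 1 < Nat.card V
  one_le_t : 1 ≤ t
  γ_pos : 0 < γ
  t_mul_γ : t * γ = e
  card_le : (Nat.card V : ℝ) ≤ t ^ m
  e_le_card : e ≤ Nat.card V
  degree_le : ∀ v, ((G.neighborSet v).ncard : ℝ) ≤ e
  coherent : Coherent G γ e

namespace SparseCoherent

variable {ι : Type*} {G : SimpleGraph V} {m : ℕ} {t γ e : ℝ}

lemma γ_le_e (hG : SparseCoherent G m t γ e) : γ ≤ e :=
  hG.t_mul_γ ▸ le_mul_of_one_le_left hG.γ_pos.le hG.one_le_t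

lemma e_pos (hG : SparseCoherent G m t γ e) : 0 < e :=
  hG.γ_pos.trans_le hG.γ_le_e

lemma m_pos (hG : SparseCoherent G m t γ e) : 0 < m := by
  refine Nat.pos_of_ne_zero fun hm => ?_
  have hcard : (Nat.card V : ℝ) ≤ 1 := by simpa [hm] using hG.card_le
  exact absurd hG.one_lt_card (not_lt.2 (by exact_mod_cast hcard))

lemma γ_le_pow (hG : SparseCoherent G m t γ e) : γ ≤ t ^ (m - 1) := by
  have ht := hG.one_le_t
  refine le_of_mul_le_mul_left (a := t) ?_ (by positivity)
  calc t * γ ≤ t ^ m := hG.t_mul_γ ▸ hG.e_le_card.trans hG.card_le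
    _ = t * t ^ (m - 1) := (mul_pow_sub_one hG.m_pos.ne' t).symm

lemma finite (hG : SparseCoherent G m t γ e) : Finite V :=
  Nat.finite_of_card_ne_zero (by have := hG.one_lt_card; omega)

-- If `e < 1` then there are no edges, contradicting coherence.
lemma one_le_e (hG : SparseCoherent G m t γ e) : 1 ≤ e := by
  have := hG.finite
  by_contra! he
  have hisolated (u v : V) : ¬ G.Adj u v := fun huv => by
    have hpos : 0 < (G.neighborSet u).ncard := (Set.ncard_pos).2 ⟨v, huv⟩
    have : ((G.neighborSet u).ncard : ℝ) < 1 := (hG.degree_le u).trans_lt he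
    exact hpos.ne' (Nat.lt_one_iff.1 (by exact_mod_cast this))
  obtain ⟨u, v, huv⟩ := (Finite.one_lt_card_iff_nontrivial.1 hG.one_lt_card).exists_pair_ne
  refine hG.coherent ⟨{u}, {v}, Set.disjoint_singleton.2 huv, fun _ _ _ _ => hisolated _ _,
    ?_, ?_⟩
  · simpa using hG.γ_le_e.trans he.le
  · simpa using he.le

lemma exists_isLight_of_not_isLight (hG : SparseCoherent G m t γ e) {T : ι → Set V}
    {Γ : ℕ → Set ι} {B : Set V} (hB : ¬ IsLight G T (5 * e) (Γ m) B) :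
    ∃ g < m, ∃ A ⊆ B, IsLight G T (5 * e) (Γ g) A ∧
      ∃ b ∈ Γ (g + 1), γ ≤ (nbhd G A ∩ T b).ncard := by
  have := hG.finite
  by_contra! hcon
  have hpow : (2 * t) ^ m ≤ B.ncard :=
    pow_le_ncard_of_not_isLight hG.γ_pos (by linarith [hG.one_le_t])
      (by linarith [hG.γ_le_e, hG.t_mul_γ])
      (fun v a => calc
        ((G.neighborSet v ∩ T a).ncard : ℝ) ≤ (G.neighborSet v).ncard := by
          exact_mod_cast Set.ncard_le_ncard Set.inter_subset_left
        _ ≤ e := hG.degree_le v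
        _ ≤ 5 * e := by linarith [hG.e_pos])
      hcon m le_rfl B subset_rfl hB
  have hcard : (B.ncard : ℝ) ≤ Nat.card V := by exact_mod_cast Set.ncard_le_card B
  have htwo : (2 : ℝ) ≤ 2 ^ m := le_self_pow₀ one_le_two hG.m_pos.ne'
  have hn : (0 : ℝ) < Nat.card V := by exact_mod_cast zero_lt_one.trans hG.one_lt_card
  have : 2 * (Nat.card V : ℝ) ≤ (2 * t) ^ m := by
    rw [mul_pow]
    gcongr
    exact hG.card_le
  linarith

lemma exists_expandsTo_singleton (hG : SparseCoherent G m t γ e) {Q Z : Set V}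
    (hQ : γ ≤ Q.ncard) (hZ : (2 * m + 3) * e ≤ Z.ncard) :
    ∃ y ∈ Q, ∃ H ⊆ Z, y ∉ H ∧ ∃ d < m, ExpandsTo G γ d {y} H := by
  have := hG.finite
  obtain rfl : t * γ = e := hG.t_mul_γ
  have hγ := hG.γ_le_pow
  obtain ⟨n, rfl⟩ := Nat.exists_eq_add_one.2 hG.m_pos
  obtain ⟨X, -, hXγ, hexp⟩ :=
    hG.coherent.exists_vertexExpands hG.γ_pos hG.one_le_t hZ (Q ∪ Z)
  obtain ⟨y, hyQ, hyX⟩ : ∃ y ∈ Q, y ∉ X :=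
    Set.exists_mem_notMem_of_ncard_lt_ncard (by exact_mod_cast hXγ.trans_le hQ)
  obtain ⟨d, hd, hE⟩ := VertexExpands.exists_expandsTo_of_layer (i := 0) (d := n) (B := {y})
    (D := {y}) (by exact_mod_cast hexp) (Set.sdiff_subset_sdiff_left Set.subset_union_right)
    hG.one_le_t (by simpa using hγ) (zero_add n)
    (Set.singleton_subset_iff.2 ⟨Or.inl hyQ, hyX⟩) subset_rfl (by simp) (by simp)
    (Set.sdiff_subset.trans Set.inter_subset_left)
  exact ⟨y, hyQ, (Z \ X) \ {y}, Set.sdiff_subset.trans Set.sdiff_subset, fun h => h.2 rfl, d,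
    by omega, hE⟩

lemma exists_card_sub_le_ncard_ball (hG : SparseCoherent G m t γ e)
    (hn : (2 * m + 3) * e ≤ Nat.card V) :
    ∃ v, (Nat.card V : ℝ) - e ≤ (G.ball v (m + 1)).ncard := by
  have := hG.finite
  have huniv : ((Set.univ : Set V).ncard : ℝ) = Nat.card V := by rw [Set.ncard_univ]
  obtain ⟨v, -, H, -, -, d, hd, hE⟩ := hG.exists_expandsTo_singleton
    (huniv ▸ hG.γ_le_e.trans hG.e_le_card) (huniv ▸ hn)
  obtain ⟨L, hL, hγL⟩ := hE.exists_subset_ball (r := 1) (v := v) (by simp)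
  have hcover := hG.coherent.sub_lt_ncard_nbhd_inter hγL disjoint_compl_right
  have hLball : L ⊆ G.ball v m := hL.trans <| ball_mono <| by exact_mod_cast (by omega : 1 + d ≤ m)
  have hsub : L ∪ nbhd G L ∩ Lᶜ ⊆ G.ball v (m + 1) :=
    Set.union_subset (hLball.trans (ball_mono le_self_add))
      (Set.inter_subset_left.trans ((nbhd_mono hLball).trans (nbhd_ball_subset v m)))
  have hunion : ((L ∪ nbhd G L ∩ Lᶜ).ncard : ℝ) = L.ncard + (nbhd G L ∩ Lᶜ).ncard := by
    exact_mod_cast Set.ncard_union_eq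
      (disjoint_compl_right.mono_right Set.inter_subset_right)
  have hcompl : (L.ncard : ℝ) + Lᶜ.ncard = Nat.card V := by
    exact_mod_cast Set.ncard_add_ncard_compl L
  have : ((L ∪ nbhd G L ∩ Lᶜ).ncard : ℝ) ≤ (G.ball v (m + 1)).ncard := by
    exact_mod_cast Set.ncard_le_ncard hsub
  exact ⟨v, by linarith⟩

end SparseCoherent

section InducedPaths

variable {G : SimpleGraph V} {a b ℓ n m : ℕ} {p q x : ℕ → V}

/-- The vertices `p 0, …, p n` form, in this order, an induced path of `G` of length `n`. -/
def IsInducedPath (G : SimpleGraph V) (n : ℕ) (p : ℕ → V) : Prop :=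
  ∀ i j, i < j → j ≤ n → p i ≠ p j ∧ (G.Adj (p i) (p j) ↔ j = i + 1)

lemma isInducedPath_zero : IsInducedPath G 0 p :=
  fun _ _ _ _ => by omega

lemma IsInducedPath.drop (hp : IsInducedPath G (n + m) p) :
    IsInducedPath G m fun j => p (n + j) := fun i j hij hj => by
  simpa only [add_assoc, add_right_inj] using hp (n + i) (n + j) (by omega) (by omega)

lemma IsInducedPath.append (hp : IsInducedPath G n p) (hq : IsInducedPath G m q)
    (hpq : ∀ i ≤ n, ∀ j ≤ m, p i ≠ q j ∧ (G.Adj (p i) (q j) ↔ i = n ∧ j = 0)) :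
    IsInducedPath G (n + 1 + m) fun j => if j ≤ n then p j else q (j - n - 1) := by
  intro i j hij hj
  by_cases hjn : j ≤ n
  · simpa only [hjn, (hij.le.trans hjn : i ≤ n), if_true] using hp i j hij hjn
  by_cases hin : i ≤ n
  · simp only [hjn, hin, if_true, if_false]
    obtain ⟨hne, hadj⟩ := hpq i hin (j - n - 1) (by omega)
    exact ⟨hne, hadj.trans (by omega)⟩
  · simp only [hjn, hin, if_false]
    obtain ⟨hne, hadj⟩ := hq (i - n - 1) (j - n - 1) (by omega) (by omega)
    exact ⟨hne, hadj.trans (by omega)⟩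

lemma cycleGraph_adj_iff_of_lt {i j : Fin ℓ} (hij : i < j) :
    (cycleGraph ℓ).Adj i j ↔ (j : ℕ) = i + 1 ∨ (i : ℕ) = 0 ∧ (j : ℕ) + 1 = ℓ := by
  rw [cycleGraph_adj', Fin.coe_sub_iff_lt.2 hij, Fin.coe_sub_iff_le.2 hij.le]
  omega

lemma contains_cycleGraph_of_forall_lt
    (hp : ∀ i j, i < j → j < ℓ → p i ≠ p j ∧
      (G.Adj (p i) (p j) ↔ j = i + 1 ∨ i = 0 ∧ j + 1 = ℓ)) :
    Contains G (cycleGraph ℓ) := by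
  have key (i j : Fin ℓ) (hij : i < j) :
      p i ≠ p j ∧ (G.Adj (p i) (p j) ↔ (cycleGraph ℓ).Adj i j) := by
    rw [cycleGraph_adj_iff_of_lt hij]
    exact hp i j hij j.2
  have hinj : Function.Injective fun i : Fin ℓ => p i := fun i j hij => by
    by_contra hne
    rcases lt_or_gt_of_ne hne with h | h
    exacts [(key i j h).1 hij, (key j i h).1 hij.symm]
  refine ⟨⟨⟨_, hinj⟩, fun {i j} => ?_⟩⟩
  rcases lt_trichotomy i j with hij | rfl | hij
  · exact (key i j hij).2
  · simp
  · rw [adj_comm, (cycleGraph ℓ).adj_comm]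
    exact (key j i hij).2

lemma IsInducedPath.contains_cycleGraph (hq : IsInducedPath G a q) (hx : IsInducedPath G b x)
    (hqx : ∀ i ≤ a, ∀ j ≤ b, q i ≠ x j ∧ (G.Adj (q i) (x j) ↔ i = 0 ∧ j = 0 ∨ i = a ∧ j = b)) :
    Contains G (cycleGraph (a + b + 2)) := by
  refine contains_cycleGraph_of_forall_lt
    (p := fun j => if j ≤ a then q j else x (a + b + 1 - j)) fun i j hij hj => ?_
  by_cases hja : j ≤ a
  · simp only [hja, (hij.le.trans hja : i ≤ a), if_true]
    obtain ⟨hne, hadj⟩ := hq i j hij hja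
    exact ⟨hne, hadj.trans (by omega)⟩
  by_cases hia : i ≤ a
  · simp only [hja, hia, if_true, if_false]
    obtain ⟨hne, hadj⟩ := hqx i hia (a + b + 1 - j) (by omega)
    exact ⟨hne, hadj.trans (by omega)⟩
  · simp only [hja, hia, if_false]
    obtain ⟨hne, hadj⟩ := hx (a + b + 1 - j) (a + b + 1 - i) (by omega) (by omega)
    exact ⟨hne.symm, by rw [adj_comm, hadj]; omega⟩

end InducedPaths

section TargetPaths

variable {G : SimpleGraph V} {y v : V} {i h K K' c m d J : ℕ} {A B E H N N' Ω Ω' : Set V}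
  {T T' : ℕ → Set V} {t γ e : ℝ}

/-- Every vertex of `B` is the end of an induced path of length `i` from `y` through `Ω`, which is
disjoint from `N`, and only the last vertex of the path may have neighbours in `N`. -/
structure IsFrontier (G : SimpleGraph V) (y : V) (i : ℕ) (B Ω N : Set V) : Prop where
  disjoint : Disjoint Ω N
  exists_path : ∀ b ∈ B, ∃ p : ℕ → V, p 0 = y ∧ p i = b ∧ IsInducedPath G i p ∧
    (∀ g ≤ i, p g ∈ Ω) ∧ ∀ g < i, ∀ u ∈ N, ¬ G.Adj (p g) u

/-- For some `a < K` there is an induced path of length `h + 1` from `y` to the target `T a` whose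
other vertices lie in `Ω` or in targets `T b` with `a < b < K`. -/
def HasTargetPath (G : SimpleGraph V) (y : V) (h : ℕ) (Ω : Set V) (T : ℕ → Set V) (K : ℕ) : Prop :=
  ∃ a < K, ∃ p : ℕ → V, p 0 = y ∧ IsInducedPath G (h + 1) p ∧ p (h + 1) ∈ T a ∧
    ∀ g ≤ h, p g ∈ Ω ∪ ⋃ b ∈ Set.Ioo a K, T b

lemma HasTargetPath.of_shift (hp : HasTargetPath G y h Ω' T' K') (hT : ∀ a, T' a ⊆ T (c + a))
    (hK : c + K' ≤ K) (hΩ : Ω' ⊆ Ω ∪ ⋃ b ∈ Set.Ico (c + K') K, T b) :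
    HasTargetPath G y h Ω T K := by
  obtain ⟨a, ha, p, hp0, hp, hpa, hpΩ⟩ := hp
  refine ⟨c + a, by omega, p, hp0, hp, hT a hpa, fun g hg => ?_⟩
  simp only [Set.mem_union, Set.mem_iUnion₂, Set.subset_def] at hpΩ hΩ ⊢
  rcases hpΩ g hg with hg | ⟨b, hb, hgb⟩
  · exact (hΩ _ hg).imp_right fun ⟨b, hb, hgb⟩ => ⟨b, ⟨by grind, hb.2⟩, hgb⟩
  · exact Or.inr ⟨c + b, ⟨by grind, by grind⟩, hT b hgb⟩

lemma isFrontier_singleton (hy : y ∉ N) : IsFrontier G y 0 {y} {y} N where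
  disjoint := Set.disjoint_singleton_left.2 hy
  exists_path := fun _ hb => ⟨fun _ => y, rfl, hb.symm, isInducedPath_zero, fun _ _ => rfl,
    fun _ hg => by omega⟩

namespace IsFrontier

lemma subset (hB : IsFrontier G y i B Ω N) : B ⊆ Ω := fun b hb => by
  obtain ⟨p, -, rfl, -, hpΩ, -⟩ := hB.exists_path b hb
  exact hpΩ i le_rfl

lemma exists_path_of_mem_nbhd (hB : IsFrontier G y i B Ω N) (hA : A ⊆ B) (hv : v ∈ nbhd G A)
    (hvN : v ∈ N) : ∃ p : ℕ → V, p 0 = y ∧ p (i + 1) = v ∧ IsInducedPath G (i + 1) p ∧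
      (∀ g ≤ i, p g ∈ Ω) ∧ p i ∈ A ∧ ∀ g < i, ∀ u ∈ N, ¬ G.Adj (p g) u := by
  obtain ⟨b, hbA, hbv⟩ := hv
  obtain ⟨p, hp0, rfl, hp, hpΩ, hpN⟩ := hB.exists_path b (hA hbA)
  have happend := hp.append (isInducedPath_zero (p := fun _ => v)) fun g hg j hj => by
    refine ⟨fun h => Set.disjoint_left.1 hB.disjoint (hpΩ g hg) (h ▸ hvN), ?_⟩
    rcases hg.lt_or_eq with hg | rfl
    · exact iff_of_false (hpN g hg v hvN) (by omega)
    · exact iff_of_true hbv (by omega)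
  refine ⟨_, by simpa using hp0, by simp, happend, fun g hg => ?_, by simpa using hbA,
    fun g hg => ?_⟩
  · simpa only [hg, if_true] using hpΩ g hg
  · simpa only [hg.le, if_true] using hpN g hg

lemma exists_path_to_target [Finite V] {S : Set V} (hB : IsFrontier G y i B Ω N)
    (hG : Coherent G γ e) (hBγ : γ ≤ B.ncard) (hS : S ⊆ N) (hSe : e ≤ S.ncard) :
    ∃ p : ℕ → V, p 0 = y ∧ IsInducedPath G (i + 1) p ∧ p (i + 1) ∈ S ∧ ∀ g ≤ i, p g ∈ Ω := by
  have hcover := hG.sub_lt_ncard_nbhd_inter hBγ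
    ((hB.disjoint.mono_left hB.subset).mono_right hS)
  obtain ⟨v, hv, hvS⟩ : (nbhd G B ∩ S).Nonempty := (Set.ncard_pos).1 <| by
    exact_mod_cast (by linarith : (0 : ℝ) < (nbhd G B ∩ S).ncard)
  obtain ⟨p, hp0, rfl, hp, hpΩ, -⟩ := hB.exists_path_of_mem_nbhd subset_rfl hv (hS hvS)
  exact ⟨p, hp0, hp, hvS, hpΩ⟩

lemma step (hB : IsFrontier G y i B Ω N) (hA : A ⊆ B) (hE : E ⊆ nbhd G A ∩ N)
    (hN' : N' ⊆ N \ nbhd G A) : IsFrontier G y (i + 1) E (Ω ∪ E) N' where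
  disjoint := Set.disjoint_union_left.2
    ⟨hB.disjoint.mono_right (hN'.trans Set.sdiff_subset),
      Set.disjoint_left.2 fun _ hv hv' => (hN' hv').2 (hE hv).1⟩
  exists_path := fun v hv => by
    obtain ⟨p, hp0, rfl, hp, hpΩ, hpA, hpN⟩ := hB.exists_path_of_mem_nbhd hA (hE hv).1 (hE hv).2
    refine ⟨p, hp0, rfl, hp, fun g hg => ?_, fun g hg u hu hadj => ?_⟩
    · rcases Nat.le_succ_iff.1 hg with hg | rfl
      exacts [Or.inl (hpΩ g hg), Or.inr hv]
    · rcases Nat.lt_succ_iff_lt_or_eq.1 hg with hg | rfl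
      exacts [hpN g hg u (hN' hu).1 hadj, (hN' hu).2 ⟨_, hpA, hadj⟩]

end IsFrontier

namespace SparseCoherent

lemma not_isLight_of_le_ncard (hG : SparseCoherent G m t γ e) {I : Set ℕ} {a : ℕ} (ha : a ∈ I)
    (hB : γ ≤ B.ncard) (hBT : Disjoint B (T a)) (hT : 6 * e ≤ (T a).ncard) :
    ¬ IsLight G T (5 * e) I B := fun hlight => by
  have := hG.finite
  have := hG.coherent.sub_lt_ncard_nbhd_inter hB hBT
  linarith [hlight a ha]

-- If `B` is light for the last block of targets, search one step further inside `H`; otherwise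
-- some `A ⊆ B` is light for one block and has many neighbours in a target of the next block.
lemma exists_expandsTo_isLight (hG : SparseCoherent G m t γ e) (hK : 0 < K)
    (hexp : ExpandsTo G γ d B H) (hBT : ∀ a < (m + 1) * K, Disjoint B (T a))
    (hT : ∀ a < (m + 1) * K, 6 * e ≤ (T a).ncard) :
    ∃ A ⊆ B, ∃ c, c + K ≤ (m + 1) * K ∧ IsLight G T (5 * e) (Set.Ico c (c + K)) A ∧
      ∃ E ⊆ nbhd G A ∩ (H ∪ ⋃ b ∈ Set.Ico (c + K) ((m + 1) * K), T b),
        ∃ d' ≤ d - 1, ExpandsTo G γ d' E (H \ nbhd G A) := by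
  by_cases hlight : IsLight G T (5 * e) (Set.Ico (m * K) (m * K + K)) B
  · obtain _ | d := d
    · have hlast : m * K < (m + 1) * K := by gcongr; omega
      exact absurd hlight (hG.not_isLight_of_le_ncard ⟨le_rfl, by omega⟩ hexp (hBT _ hlast)
        (hT _ hlast))
    · exact ⟨B, subset_rfl, m * K, by rw [add_one_mul], hlight, nbhd G B ∩ H,
        Set.inter_subset_inter_right _ Set.subset_union_left, d, le_rfl, hexp⟩
  · obtain ⟨g, hg, A, hA, hlightA, b, hb, hγ⟩ := hG.exists_isLight_of_not_isLight
      (Γ := fun g => Set.Ico (g * K) (g * K + K)) hlight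
    have hblock : g * K + K + K ≤ (m + 1) * K := by
      simpa only [add_one_mul] using Nat.mul_le_mul_right K (by omega : g + 1 + 1 ≤ m + 1)
    refine ⟨A, hA, g * K, by omega, hlightA, nbhd G A ∩ T b,
      Set.inter_subset_inter_right _ fun v hv => Or.inr ?_, 0, Nat.zero_le _, hγ⟩
    simp only [add_one_mul] at hb hblock ⊢
    exact Set.mem_iUnion₂.2 ⟨b, ⟨hb.1, hb.2.trans_le hblock⟩, hv⟩

lemma hasTargetPath (hG : SparseCoherent G m t γ e) (hdJ : d ≤ J) (hexp : ExpandsTo G γ d B H)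
    (hT : ∀ a < (m + 1) ^ J, (J + 2) * (5 * e) ≤ (T a).ncard)
    (hB : IsFrontier G y i B Ω (H ∪ ⋃ a < (m + 1) ^ J, T a)) :
    HasTargetPath G y (i + J) (Ω ∪ H) T ((m + 1) ^ J) := by
  have := hG.finite
  have he := hG.e_pos
  induction J generalizing d i B H Ω T with
  | zero =>
    obtain rfl := Nat.le_zero.1 hdJ
    have hmem : T 0 ⊆ H ∪ ⋃ a < (m + 1) ^ 0, T a := fun _ hv =>
      Or.inr (Set.mem_iUnion₂.2 ⟨0, by simp, hv⟩)
    have hT0 := hT 0 (by simp)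
    push_cast at hT0
    obtain ⟨p, hp0, hp, hpT, hpΩ⟩ := hB.exists_path_to_target hG.coherent hexp hmem (by linarith)
    exact ⟨0, by simp, p, hp0, hp, hpT, fun g hg => Or.inl (Or.inl (hpΩ g hg))⟩
  | succ J ih =>
    have hpow : (m + 1) ^ (J + 1) = (m + 1) * (m + 1) ^ J := pow_succ' _ _
    set K := (m + 1) ^ J
    rw [hpow] at hT hB ⊢
    push_cast at hT
    have hmem {a : ℕ} (ha : a < (m + 1) * K) {v : V} (hv : v ∈ T a) :
        v ∈ H ∪ ⋃ a < (m + 1) * K, T a := Or.inr (Set.mem_iUnion₂.2 ⟨a, ha, hv⟩)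
    obtain ⟨A, hAB, c, hcK, hlight, E, hE, d', hd', hexp'⟩ :=
      hG.exists_expandsTo_isLight (by positivity : 0 < K) hexp
        (fun a ha => (hB.disjoint.mono_left hB.subset).mono_right fun _ => hmem ha)
        (fun a ha => le_trans (by nlinarith [J.cast_nonneg (α := ℝ)]) (hT a ha))
    have hfrontier : IsFrontier G y (i + 1) E (Ω ∪ E)
        (H \ nbhd G A ∪ ⋃ a < K, T (c + a) \ nbhd G A) := by
      refine hB.step hAB (hE.trans (Set.inter_subset_inter_right _ ?_)) ?_
      · refine Set.union_subset_union_right _ fun v hv => ?_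
        obtain ⟨b, hb, hv⟩ := Set.mem_iUnion₂.1 hv
        exact Set.mem_iUnion₂.2 ⟨b, hb.2, hv⟩
      · refine Set.union_subset (Set.sdiff_subset_sdiff_left Set.subset_union_left) ?_
        exact Set.iUnion₂_subset fun a ha => Set.sdiff_subset_sdiff_left fun v => hmem (by omega)
    have hpath := ih (by omega) hexp' (fun a ha => ?_) hfrontier
    · rw [Nat.add_right_comm, Nat.add_assoc] at hpath
      refine hpath.of_shift (c := c) (fun a => Set.sdiff_subset) hcK ?_
      rw [Set.union_assoc Ω, Set.union_assoc Ω]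
      refine Set.union_subset_union_right _ (Set.union_subset (hE.trans Set.inter_subset_right) ?_)
      exact Set.sdiff_subset.trans Set.subset_union_left
    · rw [ncard_sdiff_eq_sub_ncard_inter]
      linarith [hT (c + a) (by omega), hlight (c + a) ⟨by omega, by omega⟩]

end SparseCoherent

end TargetPaths

section NestedCovers

variable {G : SimpleGraph V} {F : ℕ → Set V} {F₀ P R : Set V} {a b r : ℕ} {e θ τ : ℝ}

/-- The vertices outside `P` with no neighbour in the `b`-th set of the chain `F`. -/
def beyond (G : SimpleGraph V) (P : Set V) (F : ℕ → Set V) (b : ℕ) : Set V :=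
  Pᶜ \ nbhd G (F b)

/-- The vertices outside `P` that have a neighbour in `F (b + 1)` but none in `F b`. -/
def layer (G : SimpleGraph V) (P : Set V) (F : ℕ → Set V) (b : ℕ) : Set V :=
  (nbhd G (F (b + 1)) ∩ Pᶜ) \ nbhd G (F b)

lemma beyond_anti (hF : Monotone F) : Antitone (beyond G P F) :=
  fun _ _ hab => Set.sdiff_subset_sdiff_right (nbhd_mono (hF hab))

lemma layer_subset_beyond : layer G P F b ⊆ beyond G P F b :=
  Set.sdiff_subset_sdiff_left Set.inter_subset_right

lemma disjoint_layer_beyond : Disjoint (layer G P F b) (beyond G P F (b + 1)) :=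
  Set.disjoint_left.2 fun _ hv hv' => hv'.2 hv.1.1

variable [Finite V]

lemma exists_superset_ncard_nbhd_inter_le_add (he : 0 ≤ e)
    (hdeg : ∀ v, ((G.neighborSet v).ncard : ℝ) ≤ e) (hF₀ : F₀ ⊆ P)
    (hF₀τ : ((nbhd G F₀ ∩ R).ncard : ℝ) ≤ τ) (hPτ : τ ≤ (nbhd G P ∩ R).ncard) :
    ∃ F, F₀ ⊆ F ∧ F ⊆ P ∧ τ ≤ (nbhd G F ∩ R).ncard ∧ ((nbhd G F ∩ R).ncard : ℝ) ≤ τ + e := by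
  obtain ⟨F, hFP, ⟨hF₀F, hτF⟩, hmin⟩ := Finite.exists_le_minimal
    (p := fun F => F₀ ⊆ F ∧ τ ≤ (nbhd G F ∩ R).ncard) ⟨hF₀, hPτ⟩
  refine ⟨F, hF₀F, hFP, hτF, ?_⟩
  obtain rfl | hne := eq_or_ne F F₀
  · linarith
  obtain ⟨v, hvF, hvF₀⟩ := Set.exists_of_ssubset (hF₀F.ssubset_of_ne hne.symm)
  have hrest : ((nbhd G (F \ {v}) ∩ R).ncard : ℝ) < τ := by
    by_contra! hτ
    exact (hmin ⟨Set.subset_sdiff_singleton hF₀F hvF₀, hτ⟩ Set.sdiff_subset hvF).2 rfl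
  have hv : ((nbhd G {v} ∩ R).ncard : ℝ) ≤ e := by
    refine le_trans ?_ (hdeg v)
    rw [nbhd_singleton]
    exact_mod_cast Set.ncard_le_ncard Set.inter_subset_left
  have hsplit := ncard_nbhd_union_inter_le (G := G) (F \ {v}) {v} R
  rw [Set.sdiff_union_of_subset (Set.singleton_subset_iff.2 hvF)] at hsplit
  have : ((nbhd G F ∩ R).ncard : ℝ) ≤ (nbhd G (F \ {v}) ∩ R).ncard + (nbhd G {v} ∩ R).ncard := by
    exact_mod_cast hsplit
  linarith

lemma exists_monotone_ncard_nbhd_inter (he : 0 ≤ e) (heθ : e ≤ θ)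
    (hdeg : ∀ v, ((G.neighborSet v).ncard : ℝ) ≤ e) (hr : r * θ ≤ (nbhd G P ∩ R).ncard) :
    ∃ F : ℕ → Set V, Monotone F ∧ (∀ a, F a ⊆ P) ∧ ∀ a ≤ r,
      a * θ ≤ (nbhd G (F a) ∩ R).ncard ∧ ((nbhd G (F a) ∩ R).ncard : ℝ) ≤ a * θ + e := by
  induction r with
  | zero =>
    refine ⟨fun _ => ∅, monotone_const, fun _ => Set.empty_subset P, fun a ha => ?_⟩
    obtain rfl := Nat.le_zero.1 ha
    simp [nbhd_empty, he]
  | succ r ih =>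
    push_cast at hr
    obtain ⟨F, hF, hFP, hFR⟩ := ih (by linarith)
    obtain ⟨F₁, hrF₁, hF₁P, hF₁R⟩ := exists_superset_ncard_nbhd_inter_le_add he hdeg (hFP r)
      (by linarith [(hFR r le_rfl).2] : ((nbhd G (F r) ∩ R).ncard : ℝ) ≤ (r + 1) * θ) hr
    refine ⟨fun a => if a ≤ r then F a else F₁, monotone_nat_of_le_succ fun a => ?_, fun a => ?_,
      fun a ha => ?_⟩
    · rcases lt_trichotomy a r with har | rfl | har
      · simpa only [har.le, Nat.succ_le_iff.2 har, if_true] using hF a.le_succ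
      · simpa using hrF₁
      · simp [har.not_ge, (har.trans a.lt_succ_self).not_ge]
    · dsimp only
      split_ifs
      exacts [hFP a, hF₁P]
    · obtain har | rfl := Nat.le_succ_iff.1 ha
      · simpa only [har, if_true] using hFR a har
      · simpa using hF₁R

lemma exists_layers (he : 0 ≤ e) (heθ : e ≤ θ)
    (hdeg : ∀ v, ((G.neighborSet v).ncard : ℝ) ≤ e) (hr : r * θ ≤ (nbhd G P ∩ Pᶜ).ncard) :
    ∃ F : ℕ → Set V, Monotone F ∧ (∀ a, F a ⊆ P) ∧
      (∀ a < r, θ - e ≤ (layer G P F a).ncard) ∧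
      (Pᶜ.ncard : ℝ) - (r * θ + e) ≤ (beyond G P F r).ncard := by
  obtain ⟨F, hF, hFP, hFR⟩ := exists_monotone_ncard_nbhd_inter he heθ hdeg hr
  refine ⟨F, hF, hFP, fun a ha => ?_, ?_⟩
  · rw [layer, ncard_sdiff_eq_sub_ncard_inter]
    have hinter : ((nbhd G (F a) ∩ (nbhd G (F (a + 1)) ∩ Pᶜ)).ncard : ℝ) ≤
        (nbhd G (F a) ∩ Pᶜ).ncard := by
      exact_mod_cast Set.ncard_le_ncard
        (Set.inter_subset_inter_right _ Set.inter_subset_right)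
    have hlower := (hFR (a + 1) ha).1
    push_cast at hlower
    linarith [(hFR a ha.le).2]
  · rw [beyond, ncard_sdiff_eq_sub_ncard_inter]
    linarith [(hFR r le_rfl).2]

end NestedCovers

section Geodesics

variable {G : SimpleGraph V} {s v : V} {k : ℕ} {p : ℕ → V} {A : Set V}

/-- The vertices `p 0, …, p k` form, in this order, a shortest path of `G`. -/
def IsGeodesic (G : SimpleGraph V) (k : ℕ) (p : ℕ → V) : Prop :=
  ∀ i j, i ≤ j → j ≤ k → G.edist (p i) (p j) = (j - i : ℕ)

lemma isGeodesic_of_adj (hp : ∀ i < k, G.Adj (p i) (p (i + 1)))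
    (hk : k ≤ G.edist (p 0) (p k)) : IsGeodesic G k p := by
  have hle {i : ℕ} (d : ℕ) (hid : i + d ≤ k) : G.edist (p i) (p (i + d)) ≤ d := by
    induction d with
    | zero => simp
    | succ d ih =>
      calc G.edist (p i) (p (i + (d + 1)))
          ≤ G.edist (p i) (p (i + d)) + G.edist (p (i + d)) (p (i + (d + 1))) :=
            SimpleGraph.edist_triangle
        _ ≤ d + 1 := by
            gcongr
            · exact ih (by omega)
            · exact (edist_eq_one_iff_adj.2 (hp (i + d) (by omega))).le
        _ = (d + 1 : ℕ) := by norm_cast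
  intro i j hij hjk
  obtain ⟨d, rfl⟩ := Nat.exists_eq_add_of_le hij
  obtain ⟨r, rfl⟩ := Nat.exists_eq_add_of_le hjk
  have hd := hle d (by omega : i + d ≤ i + d + r)
  have hi := hle (i := 0) i (by omega)
  have hr := hle (i := i + d) r le_rfl
  have htri : G.edist (p 0) (p (i + d + r)) ≤
      G.edist (p 0) (p i) + (G.edist (p i) (p (i + d)) + G.edist (p (i + d)) (p (i + d + r))) :=
    SimpleGraph.edist_triangle.trans (add_le_add_right SimpleGraph.edist_triangle _)
  rw [zero_add] at hi
  lift G.edist (p i) (p (i + d)) to ℕ using ne_top_of_le_ne_top (ENat.natCast_ne_top d) hd with a ha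
  have : ((i + d + r : ℕ) : ℕ∞) ≤ i + (a + r) :=
    (hk.trans htri).trans (add_le_add hi (add_le_add_right hr _))
  norm_cast at this hd ⊢
  omega

lemma IsGeodesic.isInducedPath (hp : IsGeodesic G k p) : IsInducedPath G k p := fun i j hij hj => by
  have hdist := hp i j hij.le hj
  refine ⟨fun h => ?_, ?_⟩
  · rw [h, edist_self] at hdist
    exact (Nat.sub_pos_of_lt hij).ne (by exact_mod_cast hdist)
  · rw [← edist_eq_one_iff_adj, hdist, Nat.cast_eq_one]
    omega

/-- A geodesic of length `k` from `s` to `v` whose last but one vertex lies in `A`. -/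
structure IsGeodesicThrough (G : SimpleGraph V) (s : V) (k : ℕ) (A : Set V) (v : V)
    (p : ℕ → V) : Prop where
  isGeodesic : IsGeodesic G k p
  zero : p 0 = s
  last : p k = v
  mem : p (k - 1) ∈ A

lemma exists_isGeodesicThrough (hk : 0 < k) (hA : A ⊆ G.ball s k) (hv : v ∉ G.ball s k)
    (hvA : v ∈ nbhd G A) : ∃ p, IsGeodesicThrough G s k A v p := by
  obtain ⟨f, hf, hfv⟩ := hvA
  have hfs : G.edist s f < k := SimpleGraph.edist_comm ▸ hA hf
  have hvs : k ≤ G.edist s v := SimpleGraph.edist_comm ▸ not_lt.1 hv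
  obtain ⟨w, hw⟩ := exists_walk_of_edist_ne_top hfs.ne_top
  have hwk : w.length < k := by exact_mod_cast hw ▸ hfs
  have hkw : k ≤ w.length + 1 := by
    simpa only [Walk.length_concat] using
      (by exact_mod_cast hvs.trans (edist_le (w.concat hfv)) : k ≤ (w.concat hfv).length)
  obtain rfl : k = w.length + 1 := by omega
  let p (j : ℕ) : V := (w.concat hfv).getVert j
  have hlast : p (w.length + 1) = v := by
    simpa only [Walk.length_concat] using (w.concat hfv).getVert_length
  have hzero : p 0 = s := Walk.getVert_zero _
  refine ⟨p, isGeodesic_of_adj (fun i hi => Walk.adj_getVert_succ _ ?_) ?_, hzero, hlast, ?_⟩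
  · rwa [Walk.length_concat]
  · rwa [hlast, hzero]
  · have : p w.length = f := by simp [p, Walk.concat_eq_append, Walk.getVert_append]
    rwa [Nat.add_sub_cancel, this]

lemma ball_add_one_subset (hk : 0 < k) :
    G.ball s (k + 1) ⊆ G.ball s k ∪ nbhd G (G.ball s k) ∩ (G.ball s k)ᶜ := by
  intro v hv
  obtain hvk | hvk := lt_or_ge (G.edist v s) k
  · exact Or.inl hvk
  have hk' : G.edist v s = k := le_antisymm (Order.le_of_lt_add_one hv) hvk
  obtain ⟨w, hw⟩ := exists_walk_of_edist_eq_coe hk'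
  cases w with
  | nil => exact absurd hw (by simpa using hk.ne)
  | cons hadj w =>
    refine Or.inr ⟨⟨_, (edist_le w).trans_lt ?_, hadj.symm⟩, not_lt.2 hvk⟩
    rw [Walk.length_cons] at hw
    exact_mod_cast (by omega : w.length < k)

end Geodesics

section CyclesThroughGeodesics

variable {G : SimpleGraph V} {s v y z : V} {a b h i j k l : ℕ} {p x Y : ℕ → V} {A : Set V}
  {F : ℕ → Set V}

lemma IsGeodesicThrough.mem_ball (hp : IsGeodesicThrough G s k A v p) (hl : l < k) :
    p l ∈ G.ball s k := by
  rw [SimpleGraph.mem_ball, edist_comm, ← hp.zero, hp.isGeodesic 0 l l.zero_le hl.le]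
  exact_mod_cast hl

lemma IsGeodesicThrough.ne_and_not_adj (hp : IsGeodesicThrough G s k A v p)
    (hz : z ∉ G.ball s k) (hzA : z ∉ nbhd G A) (hl : l < k) : p l ≠ z ∧ ¬ G.Adj (p l) z := by
  refine ⟨fun h => hz (h ▸ hp.mem_ball hl), fun hadj => ?_⟩
  obtain rfl | hlk := (Nat.le_sub_one_of_lt hl).eq_or_lt
  · exact hzA ⟨_, hp.mem, hadj⟩
  · refine hz ?_
    calc G.edist z s ≤ G.edist z (p l) + G.edist (p l) s := SimpleGraph.edist_triangle
      _ = 1 + l := by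
        rw [edist_eq_one_iff_adj.2 hadj.symm, edist_comm (v := s), ← hp.zero,
          hp.isGeodesic 0 l l.zero_le hl.le, Nat.sub_zero]
      _ < k := by exact_mod_cast (by omega : 1 + l < k)

lemma IsGeodesic.ne_and_adj_imp (hY : IsGeodesic G k Y) (hx : IsGeodesic G k x)
    (h0 : Y 0 = x 0) (hfar : ∀ j ∈ Set.Icc 1 k, x k ∉ G.ball (Y j) k) (hj : j ≤ k) (hl : 1 ≤ l)
    (hlk : l ≤ k) : Y j ≠ x l ∧ (G.Adj (Y j) (x l) → l = 1 ∧ j ≤ 2) := by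
  have hfar' (hj1 : 1 ≤ j) : (k : ℕ∞) ≤ G.edist (Y j) (x l) + (k - l : ℕ) := by
    rw [← hx l k hlk le_rfl]
    refine le_trans ?_ SimpleGraph.edist_triangle
    rw [edist_comm]
    exact not_lt.1 (hfar j ⟨hj1, hj⟩)
  have hYj : (j : ℕ∞) ≤ G.edist (Y j) (x l) + l := by
    calc (j : ℕ∞) = G.edist (Y 0) (Y j) := by rw [hY 0 j j.zero_le hj, Nat.sub_zero]
      _ ≤ G.edist (Y 0) (x l) + G.edist (x l) (Y j) := SimpleGraph.edist_triangle
      _ = _ := by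
        rw [h0, hx 0 l l.zero_le hlk, Nat.sub_zero, edist_comm (u := x l), add_comm]
  have hxl : (l : ℕ∞) ≤ j + G.edist (Y j) (x l) := by
    calc (l : ℕ∞) = G.edist (Y 0) (x l) := by rw [h0, hx 0 l l.zero_le hlk, Nat.sub_zero]
      _ ≤ G.edist (Y 0) (Y j) + G.edist (Y j) (x l) := SimpleGraph.edist_triangle
      _ = _ := by rw [hY 0 j j.zero_le hj, Nat.sub_zero]
  refine ⟨fun h => ?_, fun hadj => ?_⟩
  · rw [h, edist_self] at hfar' hxl
    norm_cast at hfar' hxl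
    omega
  · rw [edist_eq_one_iff_adj.2 hadj] at hfar' hYj hxl
    norm_cast at hfar' hYj hxl
    omega

lemma IsGeodesicThrough.isInducedPath_append (hY : IsGeodesicThrough G s k A y Y) (hi : i ≤ k)
    (hp : IsInducedPath G (1 + h) p) (hp0 : p 0 = y)
    (hpA : ∀ g ∈ Set.Icc 1 (1 + h), p g ∉ G.ball s k ∧ p g ∉ nbhd G A) :
    IsInducedPath G (k - i + 1 + h) fun j => if j ≤ k - i then Y (i + j) else
      p (1 + (j - (k - i) - 1)) := by
  have hY' : IsInducedPath G (i + (k - i)) Y := by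
    simpa only [Nat.add_sub_cancel' hi] using hY.isGeodesic.isInducedPath
  refine hY'.drop.append hp.drop fun u hu j hj => ?_
  obtain hlt | rfl := hu.lt_or_eq
  · obtain ⟨hball, hnbhd⟩ := hpA (1 + j) ⟨by omega, by omega⟩
    obtain ⟨hne, hadj⟩ := hY.ne_and_not_adj hball hnbhd (by omega : i + u < k)
    exact ⟨hne, iff_of_false hadj (by omega)⟩
  · rw [Nat.add_sub_cancel' hi, hY.last, ← hp0]
    obtain ⟨hne, hadj⟩ := hp 0 (1 + j) (by omega) (by omega)
    exact ⟨hne, hadj.trans (by omega)⟩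

lemma contains_cycleGraph_of_geodesics (hF : Monotone F) (hab : a ≤ b) (hk : 2 ≤ k) (hi : i ≤ 2)
    (hY : IsGeodesicThrough G s k (F a) y Y) (hx : IsGeodesicThrough G s k (F b) z x)
    (hfar : ∀ j ∈ Set.Icc 1 k, z ∉ G.ball (Y j) k) (hYx : G.Adj (Y i) (x 1))
    (hlast : ∀ j, i < j → j ≤ 2 → ¬ G.Adj (Y j) (x 1)) (hp : IsInducedPath G (h + 2) p)
    (hp0 : p 0 = y) (hpz : p (h + 2) = z)
    (hbeyond : ∀ g ∈ Set.Icc 1 (1 + h), p g ∈ beyond G (G.ball s k) F b) :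
    Contains G (cycleGraph (2 * k - i + h + 2)) := by
  have hpath := hY.isInducedPath_append (hi.trans hk) (h := h)
    (fun _ _ hgj hj => hp _ _ hgj (by omega)) hp0 fun g hg => beyond_anti hF hab (hbeyond g hg)
  have hx' : IsInducedPath G (1 + (k - 1)) x := by
    simpa only [Nat.add_sub_cancel' (by omega : 1 ≤ k)] using hx.isGeodesic.isInducedPath
  rw [(by omega : 2 * k - i + h + 2 = k - i + 1 + h + (k - 1) + 2)]
  refine hpath.contains_cycleGraph hx'.drop fun u hu j hj => ?_
  by_cases hui : u ≤ k - i
  · simp only [hui, if_true]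
    obtain ⟨hne, hadj⟩ := hY.isGeodesic.ne_and_adj_imp hx.isGeodesic (hY.zero.trans hx.zero.symm)
      (hx.last ▸ hfar) (by omega : i + u ≤ k) (by omega : 1 ≤ 1 + j) (by omega)
    refine ⟨hne, fun hadj' => ?_, ?_⟩
    · obtain ⟨hj, hu2⟩ := hadj hadj'
      obtain rfl : j = 0 := by omega
      by_contra hu0
      exact hlast (i + u) (by omega) hu2 hadj'
    · rintro (⟨rfl, rfl⟩ | hu)
      exacts [hYx, by omega]
  simp only [hui, if_false]
  obtain hjk | hjk := (by omega : 1 + j ≤ k).lt_or_eq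
  · obtain ⟨hball, hnbhd⟩ := hbeyond (1 + (u - (k - i) - 1)) ⟨by omega, by omega⟩
    obtain ⟨hne, hadj⟩ := hx.ne_and_not_adj hball hnbhd hjk
    exact ⟨hne.symm, iff_of_false (fun h => hadj h.symm) (by omega)⟩
  · rw [hjk, hx.last, ← hpz]
    obtain ⟨hne, hadj⟩ := hp (1 + (u - (k - i) - 1)) (h + 2) (by omega) (by omega)
    exact ⟨hne, hadj.trans (by omega)⟩

end CyclesThroughGeodesics

section Layerings

variable {G : SimpleGraph V} {s v y : V} {b d h i k m r M : ℕ} {e t γ θ w : ℝ} {H P : Set V}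
  {F T : ℕ → Set V} {Y : ℕ → V} {φ : ℕ → ℕ}

/-- A chain `F 0 ⊆ F 1 ⊆ ⋯` of subsets of the ball `P` of radius `k` around `s` such that `P` is
small and the layers `0, …, r - 1` and the part beyond them are large. -/
structure IsLayering (G : SimpleGraph V) (m r : ℕ) (e θ : ℝ) (s : V) (k : ℕ) (F : ℕ → Set V) :
    Prop where
  two_le : 2 ≤ k
  le_m : k ≤ m
  monotone : Monotone F
  subset : ∀ b, F b ⊆ G.ball s k
  ncard_ball_le : ∀ v, 8 * m * (G.ball v k).ncard ≤ θ
  le_ncard_layer : ∀ b < r, θ - e ≤ (layer G (G.ball s k) F b).ncard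
  le_ncard_beyond : (2 * m + 3) * e ≤ (beyond G (G.ball s k) F r).ncard

namespace SparseCoherent

lemma ncard_ball_two_le (hG : SparseCoherent G m t γ e) (v : V) : (G.ball v 2).ncard ≤ 2 * e := by
  have hinsert : ((G.ball v 2).ncard : ℝ) ≤ (G.neighborSet v).ncard + 1 := by
    rw [ball_two]
    exact_mod_cast Set.ncard_insert_le _ _
  linarith [hG.degree_le v, hG.one_le_e]

lemma exists_radius (hG : SparseCoherent G m t γ e) {N μ : ℝ} (hN : 1 ≤ N) (hμ : 2 * e < μ)
    (hn : (2 * m + 3) * e ≤ Nat.card V) (hNμ : 2 * (N ^ m * μ) ≤ Nat.card V) :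
    ∃ k s η, 2 ≤ k ∧ k ≤ m ∧ μ ≤ η ∧ 2 * η ≤ Nat.card V ∧ η ≤ (G.ball s (k + 1)).ncard ∧
      ∀ v, N * (G.ball v k).ncard ≤ η := by
  classical
  have := hG.finite
  have he := hG.e_pos
  have hm : ∃ s, N ^ m * μ ≤ (G.ball s (m + 1)).ncard := by
    obtain ⟨s, hs⟩ := hG.exists_card_sub_le_ncard_ball hn
    exact ⟨s, by nlinarith⟩
  have hex : ∃ k : ℕ, ∃ s, N ^ k * μ ≤ (G.ball s (k + 1)).ncard := ⟨m, hm⟩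
  have hkm : Nat.find hex ≤ m := Nat.find_min' hex hm
  have hmin {j : ℕ} (hj : j < Nat.find hex) (v : V) : ((G.ball v (j + 1)).ncard : ℝ) < N ^ j * μ :=
    not_le.1 fun h => Nat.find_min hex hj ⟨v, h⟩
  obtain ⟨s, hs⟩ := Nat.find_spec hex
  generalize Nat.find hex = k at hkm hmin hs
  have hle (j : ℕ) : μ ≤ N ^ j * μ := le_mul_of_one_le_left (by linarith) (one_le_pow₀ hN)
  have hk : 2 ≤ k := by
    by_contra! hk
    have hball : ((G.ball s (k + 1)).ncard : ℝ) ≤ (G.ball s 2).ncard :=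
      Nat.cast_le.2 (Set.ncard_le_ncard (ball_mono (by exact_mod_cast hk)))
    linarith [hG.ncard_ball_two_le s, hle k]
  refine ⟨k, s, N ^ k * μ, hk, hkm, hle k, le_trans ?_ hNμ, hs, fun v => ?_⟩
  · gcongr
    linarith
  · obtain ⟨j, rfl⟩ := Nat.exists_eq_add_one.2 (by omega : 0 < k)
    calc N * ((G.ball v (j + 1 : ℕ)).ncard : ℝ)
        ≤ N * (N ^ j * μ) := by
          gcongr
          exact_mod_cast (hmin j.lt_succ_self v).le
      _ = N ^ (j + 1) * μ := by ring

lemma exists_isLayering (hG : SparseCoherent G m t γ e) (hr : 0 < r) (hw : (2 * m + 3) * e ≤ w)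
    (hn : 2 * ((16 * r * m) ^ m * (60 * r * w)) ≤ Nat.card V) :
    ∃ θ, 30 * w ≤ θ ∧ ∃ s k F, IsLayering G m r e θ s k F := by
  have := hG.finite
  have he := hG.e_pos
  have hm1 : (1 : ℝ) ≤ m := by exact_mod_cast hG.m_pos
  have hr1 : (1 : ℝ) ≤ r := by exact_mod_cast hr
  have hew : 5 * e ≤ w := by nlinarith
  have hrw : w ≤ r * w := le_mul_of_one_le_left (by linarith) hr1
  have hrm : 1 ≤ (r * m : ℝ) := one_le_mul_of_one_le_of_one_le hr1 hm1
  have hNr : 60 * r * w ≤ (16 * r * m) ^ m * (60 * r * w) :=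
    le_mul_of_one_le_left (by linarith) (one_le_pow₀ (by linarith))
  obtain ⟨k, s, η, hk, hkm, hwη, hηn, hη, hball⟩ := hG.exists_radius
    (by linarith : 1 ≤ 16 * r * (m : ℝ)) (by linarith : 2 * e < 60 * r * w) (by linarith) hn
  obtain ⟨θ, hrθ⟩ : ∃ θ, 2 * (r * θ) = η := ⟨η / (2 * r), by field_simp⟩
  have hwθ : 30 * w ≤ θ := by
    refine le_of_mul_le_mul_left (a := (r : ℝ)) ?_ (by linarith)
    linarith
  have hballθ (v : V) : 8 * m * ((G.ball v k).ncard : ℝ) ≤ θ := by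
    refine le_of_mul_le_mul_left (a := (2 * r : ℝ)) ?_ (by linarith)
    linarith [hball v]
  have hP : 16 * ((G.ball s k).ncard : ℝ) ≤ η := by
    refine le_trans ?_ (hball s)
    gcongr
    linarith
  have hboundary : ((G.ball s (k + 1)).ncard : ℝ) ≤
      (G.ball s k).ncard + (nbhd G (G.ball s k) ∩ (G.ball s k)ᶜ).ncard := by
    have hsub := ball_add_one_subset (G := G) (s := s) (by omega : 0 < k)
    exact_mod_cast (Set.ncard_le_ncard hsub).trans (Set.ncard_union_le _ _)
  have hcompl : ((G.ball s k).ncard : ℝ) + ((G.ball s k)ᶜ).ncard = Nat.card V := by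
    exact_mod_cast Set.ncard_add_ncard_compl (G.ball s k)
  obtain ⟨F, hF, hFs, hlayer, hbeyond⟩ := exists_layers he.le (by linarith : e ≤ θ) hG.degree_le
    (by linarith : r * θ ≤ (nbhd G (G.ball s k) ∩ (G.ball s k)ᶜ).ncard)
  exact ⟨θ, hwθ, s, k, F, hk, hkm, hF, hFs, hballθ, hlayer, by linarith⟩

end SparseCoherent

/-- The vertices `v` of the `b`-th layer lying at distance at least `k` from `Y 1, …, Y k` which
are the end of a geodesic `x` through `F (b + 1)` such that `Y i` is the last of the vertices
`Y 0, Y 1, Y 2` adjacent to `x 1`. -/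
def attached (G : SimpleGraph V) (s : V) (k : ℕ) (F : ℕ → Set V) (Y : ℕ → V) (i b : ℕ) : Set V :=
  {v ∈ layer G (G.ball s k) F b | (∀ j ∈ Set.Icc 1 k, v ∉ G.ball (Y j) k) ∧
    ∃ x, IsGeodesicThrough G s k (F (b + 1)) v x ∧ G.Adj (Y i) (x 1) ∧
      ∀ j, i < j → j ≤ 2 → ¬ G.Adj (Y j) (x 1)}

namespace IsLayering

lemma exists_isGeodesicThrough (hL : IsLayering G m r e θ s k F)
    (hv : v ∈ layer G (G.ball s k) F b) :
    ∃ x, IsGeodesicThrough G s k (F (b + 1)) v x :=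
  PurePairs.exists_isGeodesicThrough (by have := hL.two_le; omega) (hL.subset _) hv.1.2 hv.1.1

lemma layer_sdiff_subset_iUnion_attached (hL : IsLayering G m r e θ s k F) (hY : Y 0 = s) :
    layer G (G.ball s k) F b \ (⋃ j ∈ Finset.Icc 1 k, G.ball (Y j) k) ⊆
      ⋃ i ∈ Finset.range 3, attached G s k F Y i b := by
  classical
  rintro v ⟨hv, hvY⟩
  obtain ⟨x, hx⟩ := hL.exists_isGeodesicThrough hv
  have h0 : G.Adj (Y 0) (x 1) := by
    rw [hY, ← hx.zero]
    exact (hx.isGeodesic.isInducedPath 0 1 one_pos (by have := hL.two_le; omega)).2.2 rfl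
  refine Set.mem_iUnion₂.2 ⟨Nat.findGreatest (fun j => G.Adj (Y j) (x 1)) 2,
    Finset.mem_range_succ_iff.2 (Nat.findGreatest_le 2), hv, fun j hj hvj => hvY ?_, x, hx,
    Nat.findGreatest_spec (P := fun j => G.Adj (Y j) (x 1)) (Nat.zero_le 2) h0,
    fun j => Nat.findGreatest_is_greatest⟩
  exact Set.mem_iUnion₂.2 ⟨j, Finset.mem_Icc.2 hj, hvj⟩

lemma le_ncard_iUnion_attached [Finite V] (hL : IsLayering G m r e θ s k F) (hY : Y 0 = s)
    (hb : b < r) :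
    θ * (7 / 8) - e ≤ (⋃ i ∈ Finset.range 3, attached G s k F Y i b).ncard := by
  have hconflict : ((⋃ j ∈ Finset.Icc 1 k, G.ball (Y j) k).ncard : ℝ) ≤ θ / 8 := by
    have hk := hL.two_le
    have hkm := hL.le_m
    have hm : (0 : ℝ) < m := by exact_mod_cast (by omega : 0 < m)
    have hθ : 0 ≤ θ := le_trans (by positivity) (hL.ncard_ball_le s)
    calc ((⋃ j ∈ Finset.Icc 1 k, G.ball (Y j) k).ncard : ℝ)
        ≤ ∑ j ∈ Finset.Icc 1 k, ((G.ball (Y j) k).ncard : ℝ) := by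
          exact_mod_cast Finset.set_ncard_biUnion_le _ _
      _ ≤ ∑ j ∈ Finset.Icc 1 k, θ / (8 * m) := by
          gcongr with j
          exact (le_div_iff₀' (by positivity)).2 (hL.ncard_ball_le (Y j))
      _ = k * (θ / (8 * m)) := by simp
      _ ≤ m * (θ / (8 * m)) := by gcongr
      _ = θ / 8 := by field_simp
  have hsub : ((layer G (G.ball s k) F b \ ⋃ j ∈ Finset.Icc 1 k, G.ball (Y j) k).ncard : ℝ) ≤
      (⋃ i ∈ Finset.range 3, attached G s k F Y i b).ncard := by
    exact_mod_cast Set.ncard_le_ncard (hL.layer_sdiff_subset_iUnion_attached hY)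
  have hsdiff : ((layer G (G.ball s k) F b).ncard : ℝ) ≤
      (layer G (G.ball s k) F b \ ⋃ j ∈ Finset.Icc 1 k, G.ball (Y j) k).ncard +
        (⋃ j ∈ Finset.Icc 1 k, G.ball (Y j) k).ncard := by
    exact_mod_cast Set.ncard_le_ncard_sdiff_add_ncard _ _
  linarith [hL.le_ncard_layer b hb]

end IsLayering

lemma exists_strictMonoOn_le_ncard [Finite V] {T : ℕ → ℕ → Set V} (hr : 0 < r)
    (hT : ∀ b < r * M, r * θ ≤ (⋃ i ∈ Finset.range r, T i b).ncard) :
    ∃ i < r, ∃ φ : ℕ → ℕ, StrictMonoOn φ (Set.Iio M) ∧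
      ∀ a < M, φ a < r * M ∧ θ ≤ (T i (φ a)).ncard := by
  have hlarge (b : ℕ) (hb : b < r * M) : ∃ i < r, θ ≤ (T i b).ncard := by
    by_contra! hcon
    have hsum : ((⋃ i ∈ Finset.range r, T i b).ncard : ℝ) < r * θ := by
      calc ((⋃ i ∈ Finset.range r, T i b).ncard : ℝ)
          ≤ ∑ i ∈ Finset.range r, ((T i b).ncard : ℝ) := by
            exact_mod_cast Finset.set_ncard_biUnion_le _ _
        _ < ∑ _i ∈ Finset.range r, θ := Finset.sum_lt_sum_of_nonempty
            (Finset.nonempty_range_iff.2 hr.ne') fun i hi => hcon i (Finset.mem_range.1 hi)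
        _ = r * θ := by simp
    exact hsum.not_ge (hT b hb)
  choose! c hcr hcθ using hlarge
  obtain ⟨i, hi, hM⟩ := Finset.exists_le_card_fiber_of_mul_le_card_of_maps_to
    (s := Finset.range (r * M)) (t := Finset.range r) (f := c) (n := M)
    (fun b hb => Finset.mem_range.2 (hcr b (Finset.mem_range.1 hb)))
    (Finset.nonempty_range_iff.2 hr.ne') (by simp)
  set S := {b ∈ Finset.range (r * M) | c b = i}
  have hS : (Set.ofPred (· ∈ S)).Finite := S.finite_toSet
  have hcard : M ≤ hS.toFinset.card := by simpa using hM
  refine ⟨i, Finset.mem_range.1 hi, Nat.nth (· ∈ S),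
    (Nat.nth_strictMonoOn hS).mono (Set.Iio_subset_Iio hcard), fun a ha => ?_⟩
  obtain ⟨hlt, hci⟩ := Finset.mem_filter.1 (Nat.nth_mem_of_lt_card hS (ha.trans_le hcard))
  exact ⟨Finset.mem_range.1 hlt, hci ▸ hcθ _ (Finset.mem_range.1 hlt)⟩

namespace SparseCoherent

lemma exists_path_to_layer (hG : SparseCoherent G m t γ e) (hF : Monotone F)
    (hy : y ∈ layer G P F 0) (hH : H ⊆ beyond G P F r) (hyH : y ∉ H)
    (hexp : ExpandsTo G γ d {y} H) (hdh : d ≤ h) (hM : (m + 1) ^ h ≤ M)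
    (hφ : StrictMonoOn φ (Set.Iio M)) (hφr : ∀ a < M, φ a ∈ Set.Ioo 0 r)
    (hTφ : ∀ a < M, T a ⊆ layer G P F (φ a))
    (hT : ∀ a < M, (h + 2) * (5 * e) ≤ (T a).ncard) :
    ∃ a < M, ∃ p : ℕ → V, p 0 = y ∧ IsInducedPath G (h + 1) p ∧ p (h + 1) ∈ T a ∧
      ∀ g ∈ Set.Icc 1 h, p g ∈ beyond G P F (φ a + 1) := by
  have hlayer {a b : ℕ} (ha : a < M) (hb : b ≤ φ a) : T a ⊆ beyond G P F b :=
    (hTφ a ha).trans (layer_subset_beyond.trans (beyond_anti hF hb))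
  have hyT (a : ℕ) (ha : a < M) : y ∉ T a := fun h =>
    Set.disjoint_left.1 disjoint_layer_beyond hy (hlayer ha (hφr a ha).1 h)
  have hfrontier : IsFrontier G y 0 {y} {y} (H ∪ ⋃ a < (m + 1) ^ h, T a) := by
    refine isFrontier_singleton ?_
    simp only [Set.mem_union, Set.mem_iUnion, not_or, not_exists]
    exact ⟨hyH, fun a ha => hyT a (ha.trans_le hM)⟩
  obtain ⟨a, ha, p, hp0, hp, hpa, hpΩ⟩ :=
    hG.hasTargetPath hdh hexp (fun a ha => hT a (ha.trans_le hM)) hfrontier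
  rw [zero_add] at hp hpa hpΩ
  have haM := ha.trans_le hM
  refine ⟨a, haM, p, hp0, hp, hpa, fun g hg => ?_⟩
  obtain (hgy | hgH) | hgT := hpΩ g hg.2
  · exact absurd (hp0.trans hgy.symm) (hp 0 g hg.1 (by have := hg.2; omega)).1
  · exact beyond_anti hF (Nat.succ_le_of_lt (hφr a haM).2) (hH hgH)
  · obtain ⟨b, hb, hgb⟩ := Set.mem_iUnion₂.1 hgT
    have hbM := hb.2.trans_le hM
    exact hlayer hbM (Nat.succ_le_of_lt (hφ haM hbM hb.1)) hgb

lemma contains_cycleGraph_of_isLayering (hG : SparseCoherent G m t γ e) {ℓ : ℕ}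
    (hℓ : 3 * m + 3 ≤ ℓ) (hL : IsLayering G m (3 * (m + 1) ^ ℓ + 1) e θ s k F)
    (hθ : 30 * ((ℓ + 2) * e) ≤ θ) : Contains G (cycleGraph ℓ) := by
  have := hG.finite
  have he := hG.e_pos
  have hk := hL.two_le
  have hkm := hL.le_m
  have hℓ0 : (0 : ℝ) ≤ ℓ := ℓ.cast_nonneg
  set M := (m + 1) ^ ℓ
  obtain ⟨y, hy, H, hH, hyH, d, hd, hexp⟩ := hG.exists_expandsTo_singleton
    (le_trans (by nlinarith [hG.γ_le_e]) (hL.le_ncard_layer 0 (by omega))) hL.le_ncard_beyond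
  obtain ⟨Y, hY⟩ := hL.exists_isGeodesicThrough hy
  obtain ⟨i, hi, φ, hφ, hφM⟩ := exists_strictMonoOn_le_ncard (r := 3) (M := M) (θ := θ / 6)
    (T := fun i b => attached G s k F Y i (b + 1)) three_pos fun b hb => by
      refine le_trans ?_ (hL.le_ncard_iUnion_attached hY.zero (by omega : b + 1 < 3 * M + 1))
      push_cast
      nlinarith
  obtain ⟨h, rfl⟩ : ∃ h, ℓ = 2 * k - i + h + 2 := ⟨ℓ - 2 - (2 * k - i), by omega⟩
  have hsize (a : ℕ) (ha : a < M) :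
      ((h + 1 : ℕ) + 2) * (5 * e) ≤ (attached G s k F Y i (φ a + 1)).ncard := by
    have : ((h + 1 : ℕ) + 2 : ℝ) ≤ (2 * k - i + h + 2 : ℕ) + 2 := by
      exact_mod_cast (by omega : h + 1 + 2 ≤ 2 * k - i + h + 2 + 2)
    nlinarith [(hφM a ha).2]
  obtain ⟨a, _, p, hp0, hp, hpa, hpg⟩ := hG.exists_path_to_layer (h := h + 1) (M := M)
    (φ := fun a => φ a + 1) (T := fun a => attached G s k F Y i (φ a + 1)) hL.monotone hy hH hyH
    hexp (by omega) (Nat.pow_le_pow_right m.succ_pos (by omega))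
    (fun _ ha _ hb hab => Nat.succ_lt_succ (hφ ha hb hab))
    (fun a ha => ⟨by omega, by have := (hφM a ha).1; omega⟩) (fun _ _ _ hv => hv.1) hsize
  obtain ⟨-, hfar, x, hx, hYx, hlast⟩ := hpa
  exact contains_cycleGraph_of_geodesics hL.monotone (by omega) hk (by omega) hY hx hfar hYx
    hlast hp hp0 rfl fun g hg => hpg g (by rwa [add_comm])

end SparseCoherent

end Layerings

lemma EpsSparse.sparseCoherent [Fintype V] {G : SimpleGraph V} {c ε : ℝ} {m : ℕ}
    (hs : EpsSparse G ε) (hε : 0 < ε) (hε1 : ε ≤ 1) (hc : 0 ≤ c) (hcm : 1 ≤ c * m)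
    (hV : 1 < Fintype.card V)
    (hG : Coherent G (ε * (Fintype.card V : ℝ) ^ (1 - c)) (ε * Fintype.card V)) :
    SparseCoherent G m ((Fintype.card V : ℝ) ^ c) (ε * (Fintype.card V : ℝ) ^ (1 - c))
      (ε * Fintype.card V) := by
  have hn : (1 : ℝ) ≤ Fintype.card V := by exact_mod_cast hV.le
  have hn0 : (0 : ℝ) < Fintype.card V := by positivity
  refine ⟨?_, Real.one_le_rpow hn hc, by positivity, ?_, ?_, ?_, fun v => (hs v).le, hG⟩
  · rwa [Nat.card_eq_fintype_card]
  · rw [mul_left_comm, ← Real.rpow_add hn0, add_sub_cancel, Real.rpow_one]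
  · rw [Nat.card_eq_fintype_card, ← Real.rpow_mul_natCast hn0.le]
    exact Real.self_le_rpow_of_one_le hn hcm
  · rw [Nat.card_eq_fintype_card]
    exact mul_le_of_le_one_left hn0.le hε1

lemma SparseCoherent.contains_cycleGraph {G : SimpleGraph V} {m ℓ r : ℕ} {t γ e : ℝ}
    (hG : SparseCoherent G m t γ e) (hℓ : 3 * m + 3 ≤ ℓ) (hr : r = 3 * (m + 1) ^ ℓ + 1)
    (hn : 2 * ((16 * r * m) ^ m * (60 * r * ((ℓ + 2) * e))) ≤ Nat.card V) :
    Contains G (cycleGraph ℓ) := by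
  have he := hG.e_pos
  have hmℓ : (2 * m + 3 : ℝ) ≤ ℓ + 2 := by exact_mod_cast (by omega : 2 * m + 3 ≤ ℓ + 2)
  obtain ⟨θ, hθ, s, k, F, hL⟩ := hG.exists_isLayering (by omega) (by gcongr) hn
  exact hG.contains_cycleGraph_of_isLayering hℓ (hr ▸ hL) hθ

theorem statement_16_general (c : ℝ) (hc : 0 < c) (ℓ : ℕ) (hℓ : 3 * ⌈1 / c⌉₊ + 3 ≤ ℓ) :
    ∃ ε : ℝ, 0 < ε ∧ ∀ {V : Type*} [Fintype V] (G : SimpleGraph V),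
      1 < Fintype.card V → EpsSparse G ε →
      Coherent G (ε * (Fintype.card V : ℝ) ^ (1 - c)) (ε * (Fintype.card V : ℝ)) →
      Contains G (cycleGraph ℓ) := by
  obtain ⟨m, hm⟩ : ∃ m, m = ⌈1 / c⌉₊ := ⟨_, rfl⟩
  obtain ⟨r, hr⟩ : ∃ r, r = 3 * (m + 1) ^ ℓ + 1 := ⟨_, rfl⟩
  have hm0 : 1 ≤ (m : ℝ) := by exact_mod_cast hm ▸ Nat.ceil_pos.2 (by positivity)
  have hr0 : 1 ≤ (r : ℝ) := by exact_mod_cast (by omega : 1 ≤ r)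
  have hcm : 1 ≤ c * m := by
    rw [← div_le_iff₀' hc, hm]
    exact Nat.le_ceil _
  obtain ⟨D, hD⟩ : ∃ D : ℝ, D = 2 * ((16 * r * m) ^ m * (60 * r * (ℓ + 2))) := ⟨_, rfl⟩
  have hD1 : 1 ≤ D := by
    have := one_le_pow₀ (n := m) (by nlinarith : (1 : ℝ) ≤ 16 * r * m)
    have := one_le_mul_of_one_le_of_one_le this
      (by nlinarith [ℓ.cast_nonneg (α := ℝ)] : (1 : ℝ) ≤ 60 * r * (ℓ + 2))
    linarith
  refine ⟨D⁻¹, by positivity, fun G hV hs hG => ?_⟩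
  have hG' := hs.sparseCoherent (by positivity) (inv_le_one_of_one_le₀ hD1) hc.le hcm hV hG
  refine hG'.contains_cycleGraph (hm ▸ hℓ) hr (le_of_eq ?_)
  calc 2 * ((16 * r * m) ^ m * (60 * r * ((ℓ + 2) * (D⁻¹ * (Fintype.card _ : ℝ)))))
      = D * D⁻¹ * Fintype.card _ := by rw [hD]; ring
    _ = _ := by rw [mul_inv_cancel₀ (by positivity), one_mul, Nat.card_eq_fintype_card]

/-- if `1/c` is an integer and `ℓ ≥ 3/c + 3`, there is `ε > 0` such
that every `ε`-sparse `(ε|G|^{1-c}, ε|G|)`-coherent graph `G` with `|G| > 1` has an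
induced cycle of length `ℓ`. -/
theorem statement_16 (c : ℝ) (hc : 0 < c) (hcint : ∃ m : ℤ, 1/c = (m : ℝ))
    (ℓ : ℕ) (hℓ : 3/c + 3 ≤ (ℓ : ℝ)) :
    ∃ ε : ℝ, 0 < ε ∧ ∀ {V : Type} [Fintype V] (G : SimpleGraph V),
      1 < Fintype.card V → EpsSparse G ε →
      Coherent G (ε * (Fintype.card V : ℝ) ^ (1 - c)) (ε * (Fintype.card V : ℝ)) →
      Contains G (SimpleGraph.cycleGraph ℓ) := by
  refine statement_16_general c hc ℓ ?_
  obtain ⟨m, hm⟩ := hcint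
  have hceil : (⌈1 / c⌉₊ : ℝ) = 1 / c := by
    rw [natCast_ceil_eq_intCast_ceil (by positivity), hm, Int.ceil_intCast]
  exact_mod_cast (by rw [hceil]; linarith [mul_one_div 3 c] : 3 * (⌈1 / c⌉₊ : ℝ) + 3 ≤ ℓ)

end PurePairs
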